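/- arXiv:2110.02796 — 6 statements merged into one kernel-verified Lean document; each statement's English description precedes it below -/
import Mathlib

section
/- For every classifier W = (w_1,…,w_K) and feature matrix H = (h_{k,i}), the margin satisfies q_min(W,H) ≤ (‖W‖_F² + ‖H‖_F²) / (2(K−1)√n). -/
/-!
Fix a class `k` and a sample `h k i`. Summing the margin inequalities over the other classes `j`
gives `(K - 1) q ≤ ⟪D k, h k i⟫` with `D k = ∑ j, (w k - w j)`, which is `K` times the deviation of
`w k` from the mean classifier; subtracting the mean only decreases the energy, so
`∑ k, ‖D k‖² ≤ K² ‖W‖²`. Young's inequality with weight `√n K` splits each inner product into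
`‖D k‖²` and `n K² ‖h k i‖²`. This weight balances the two energies: summed over all samples, every
`‖D k‖²` is counted `n` times, so both energies carry the common factor `n K²`.
-/

open scoped BigOperators RealInnerProductSpace
open Finset

noncomputable def sWH {K n d : ℕ} (W : Fin K → EuclideanSpace ℝ (Fin d))
    (H : Fin K → Fin n → EuclideanSpace ℝ (Fin d)) (k : Fin K) (i : Fin n) (j : Fin K) : ℝ :=
  ⟪W k - W j, H k i⟫

noncomputable def WF2 {K d : ℕ} (W : Fin K → EuclideanSpace ℝ (Fin d)) : ℝ := ∑ k, ‖W k‖ ^ 2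

noncomputable def HF2 {K n d : ℕ} (H : Fin K → Fin n → EuclideanSpace ℝ (Fin d)) : ℝ :=
  ∑ k, ∑ i, ‖H k i‖ ^ 2

noncomputable def qmin {K n d : ℕ} (W : Fin K → EuclideanSpace ℝ (Fin d))
    (H : Fin K → Fin n → EuclideanSpace ℝ (Fin d)) : ℝ :=
  sInf {x : ℝ | ∃ k i j, j ≠ k ∧ x = sWH W H k i j}

noncomputable def LWH {K n d : ℕ} (W : Fin K → EuclideanSpace ℝ (Fin d))
    (H : Fin K → Fin n → EuclideanSpace ℝ (Fin d)) : ℝ :=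
  ∑ k, ∑ i, Real.log (1 + ∑ j ∈ univ.filter (fun j => j ≠ k), Real.exp (-(sWH W H k i j)))

section InnerProductSpace

variable {ι κ E : Type*} [Fintype ι] [SeminormedAddCommGroup E] [InnerProductSpace ℝ E]

theorem two_mul_mul_inner_le_norm_sq_add (c : ℝ) (x y : E) :
    2 * c * ⟪x, y⟫ ≤ ‖x‖ ^ 2 + c ^ 2 * ‖y‖ ^ 2 := by
  have expand : ‖x - c • y‖ ^ 2 = ‖x‖ ^ 2 - 2 * (c * ⟪x, y⟫) + c ^ 2 * ‖y‖ ^ 2 := by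
    rw [norm_sub_sq_real, real_inner_smul_right, norm_smul, mul_pow, Real.norm_eq_abs, sq_abs]
  linarith [sq_nonneg ‖x - c • y‖]

theorem sum_norm_sq_sum_sub_eq (w : ι → E) :
    ∑ k, ‖∑ j, (w k - w j)‖ ^ 2 =
      (Fintype.card ι : ℝ) ^ 2 * ∑ k, ‖w k‖ ^ 2 - Fintype.card ι * ‖∑ k, w k‖ ^ 2 := by
  have deviation (k : ι) : ∑ j, (w k - w j) = (Fintype.card ι : ℝ) • w k - ∑ j, w j := by
    rw [sum_sub_distrib, sum_const, card_univ, Nat.cast_smul_eq_nsmul]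
  simp only [deviation, norm_sub_sq_real, norm_smul, mul_pow, Real.norm_natCast,
    real_inner_smul_left, sum_add_distrib, sum_sub_distrib, ← mul_sum, ← sum_inner,
    real_inner_self_eq_norm_sq, sum_const, card_univ, nsmul_eq_mul]
  ring

theorem sum_norm_sq_sum_sub_le (w : ι → E) :
    ∑ k, ‖∑ j, (w k - w j)‖ ^ 2 ≤ (Fintype.card ι : ℝ) ^ 2 * ∑ k, ‖w k‖ ^ 2 := by
  rw [sum_norm_sq_sum_sub_eq]
  exact sub_le_self _ (by positivity)

theorem card_sub_one_mul_le_inner_sum_sub {q : ℝ} {w : ι → E} {k : ι} {x : E}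
    (hq : ∀ j, j ≠ k → q ≤ ⟪w k - w j, x⟫) :
    ((Fintype.card ι : ℝ) - 1) * q ≤ ⟪∑ j, (w k - w j), x⟫ := by
  classical
  have card_erase : ((univ.erase k).card : ℝ) = Fintype.card ι - 1 :=
    by
    rw [cast_card_erase_of_mem (mem_univ k), card_univ]
  calc ((Fintype.card ι : ℝ) - 1) * q
      = (univ.erase k).card • q := by rw [nsmul_eq_mul, card_erase]
    _ ≤ ∑ j ∈ univ.erase k, ⟪w k - w j, x⟫ :=
        card_nsmul_le_sum _ _ _ fun j hj => hq j (ne_of_mem_erase hj)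
    _ = ∑ j, ⟪w k - w j, x⟫ := sum_erase _ (by rw [sub_self, inner_zero_left])
    _ = ⟪∑ j, (w k - w j), x⟫ := (sum_inner _ _ _).symm

theorem two_mul_mul_margin_le {q c : ℝ} {w : ι → E} {k : ι} {x : E} (hc : 0 ≤ c)
    (hq : ∀ j, j ≠ k → q ≤ ⟪w k - w j, x⟫) :
    2 * c * (((Fintype.card ι : ℝ) - 1) * q) ≤
      ‖∑ j, (w k - w j)‖ ^ 2 + c ^ 2 * ‖x‖ ^ 2 :=
  calc 2 * c * (((Fintype.card ι : ℝ) - 1) * q)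
      ≤ 2 * c * ⟪∑ j, (w k - w j), x⟫ := by
        gcongr
        exact card_sub_one_mul_le_inner_sum_sub hq
    _ ≤ ‖∑ j, (w k - w j)‖ ^ 2 + c ^ 2 * ‖x‖ ^ 2 := two_mul_mul_inner_le_norm_sq_add _ _ _

variable [Fintype κ]

theorem card_mul_card_mul_margin_le {q c : ℝ} {w : ι → E} {h : ι → κ → E} (hc : 0 ≤ c)
    (hq : ∀ k i j, j ≠ k → q ≤ ⟪w k - w j, h k i⟫) :
    (Fintype.card ι : ℝ) * (Fintype.card κ * (2 * c * ((Fintype.card ι - 1) * q))) ≤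
      Fintype.card κ * ((Fintype.card ι : ℝ) ^ 2 * ∑ k, ‖w k‖ ^ 2) +
        c ^ 2 * ∑ k, ∑ i, ‖h k i‖ ^ 2 :=
  calc (Fintype.card ι : ℝ) * (Fintype.card κ * (2 * c * ((Fintype.card ι - 1) * q)))
      = ∑ _k : ι, ∑ _i : κ, 2 * c * (((Fintype.card ι : ℝ) - 1) * q) := by
        simp only [sum_const, card_univ, nsmul_eq_mul]
    _ ≤ ∑ k, ∑ i, (‖∑ j, (w k - w j)‖ ^ 2 + c ^ 2 * ‖h k i‖ ^ 2) :=
        sum_le_sum fun k _ => sum_le_sum fun i _ => two_mul_mul_margin_le hc (hq k i)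
    _ = Fintype.card κ * ∑ k, ‖∑ j, (w k - w j)‖ ^ 2 + c ^ 2 * ∑ k, ∑ i, ‖h k i‖ ^ 2 := by
        simp only [sum_add_distrib, sum_const, card_univ, nsmul_eq_mul, ← mul_sum]
    _ ≤ Fintype.card κ * ((Fintype.card ι : ℝ) ^ 2 * ∑ k, ‖w k‖ ^ 2) +
          c ^ 2 * ∑ k, ∑ i, ‖h k i‖ ^ 2 := by
        gcongr
        exact sum_norm_sq_sum_sub_le w

theorem margin_upper_bound_general [Nontrivial ι] [Nonempty κ] {q : ℝ} {w : ι → E}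
    {h : ι → κ → E} (hq : ∀ k i j, j ≠ k → q ≤ ⟪w k - w j, h k i⟫) :
    q ≤ (∑ k, ‖w k‖ ^ 2 + ∑ k, ∑ i, ‖h k i‖ ^ 2) /
      (2 * ((Fintype.card ι : ℝ) - 1) * √(Fintype.card κ)) := by
  have weighted := card_mul_card_mul_margin_le (c := √(Fintype.card κ) * Fintype.card ι)
    (by positivity) hq
  set K := (Fintype.card ι : ℝ)
  set n := (Fintype.card κ : ℝ)
  have n_pos : 0 < n := Nat.cast_pos.2 Fintype.card_pos
  have one_lt_K : 1 < K := Nat.one_lt_cast.2 Fintype.one_lt_card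
  have K_sub_one_pos : 0 < K - 1 := sub_pos.2 one_lt_K
  rw [mul_pow, Real.sq_sqrt n_pos.le] at weighted
  rw [le_div_iff₀ (by positivity)]
  refine le_of_mul_le_mul_left ?_ (show 0 < n * K ^ 2 by positivity)
  linarith

end InnerProductSpace

theorem qmin_le_sWH {K n d : ℕ} (W : Fin K → EuclideanSpace ℝ (Fin d))
    (H : Fin K → Fin n → EuclideanSpace ℝ (Fin d)) (k : Fin K) (i : Fin n) (j : Fin K)
    (hj : j ≠ k) : qmin W H ≤ sWH W H k i j := by
  have finite_margins : {x : ℝ | ∃ k i j, j ≠ k ∧ x = sWH W H k i j}.Finite :=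
    (Set.finite_range fun p : Fin K × Fin n × Fin K => sWH W H p.1 p.2.1 p.2.2).subset <| by
      rintro _ ⟨k, i, j, -, rfl⟩
      exact ⟨(k, i, j), rfl⟩
  exact csInf_le finite_margins.bddBelow ⟨k, i, j, hj, rfl⟩

theorem margin_upper_bound {K n d : ℕ} (hK : 2 ≤ K) (hn : 1 ≤ n) (hd : 1 ≤ d)
    (W : Fin K → EuclideanSpace ℝ (Fin d)) (H : Fin K → Fin n → EuclideanSpace ℝ (Fin d)) :
    qmin W H ≤ (WF2 W + HF2 H) / (2 * ((K : ℝ) - 1) * Real.sqrt n) := by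
  have : Nontrivial (Fin K) := Fin.nontrivial_iff_two_le.2 hK
  have : Nonempty (Fin n) := Fin.pos_iff_nonempty.1 hn
  simpa only [WF2, HF2, Fintype.card_fin] using margin_upper_bound_general (qmin_le_sWH W H)
end

section
/- Equality q_min(W,H) = (‖W‖_F² + ‖H‖_F²)/(2(K−1)√n) holds if and only if all of the following hold: (a) Σ_{k=1}^K w_k = 0; (b) w_k = √n · h_{k,i} for every k ∈ [K] and i ∈ [n]; (c) ‖w_k‖² = (‖W‖_F² + ‖H‖_F²)/(2K) for every k; (d) ⟨w_k, w_j⟩ = −(‖W‖_F² + ‖H‖_F²)/(2K(K−1)) for every k ≠ j. In particular, at equality ‖W‖_F = ‖H‖_F. -/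
open scoped BigOperators RealInnerProductSpace
open Finset

/-! Write `v k` for `W k` minus the mean of the classifiers. For fixed `k` and `i` the margins add
up to `K ⟪v k, H k i⟫`, and polarization turns `2 √n ⟪v k, H k i⟫` into
`‖v k‖² + n ‖H k i‖² - ‖v k - √n H k i‖²`. Hence the gap between the bound and the smallest margin
is, up to a positive factor, a sum of three nonnegative terms: multiples of the total excess of the
margins over the smallest one, of `‖∑ W k‖²`, and of the misalignment `∑ ‖v k - √n H k i‖²`.
Equality makes all three vanish, and for vectors with sum zero, equal margins determine the Gram
matrix. -/

theorem eq_zero_of_sum_sum_eq_zero {ι κ M : Type*} [Fintype ι] [Fintype κ] [AddCommMonoid M]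
    [PartialOrder M] [IsOrderedAddMonoid M] {f : ι → κ → M} (hf : ∀ a b, 0 ≤ f a b)
    (h : ∑ a, ∑ b, f a b = 0) (a : ι) (b : κ) : f a b = 0 := by
  rw [Fintype.sum_eq_zero_iff_of_nonneg fun a => sum_nonneg fun b _ => hf a b] at h
  exact congrFun ((Fintype.sum_eq_zero_iff_of_nonneg (hf a)).mp (congrFun h a)) b

section

variable {ι κ E : Type*} [NormedAddCommGroup E] [InnerProductSpace ℝ E]

/-- The smallest margin of the classifiers `W` on the features `H`: the quantity `qmin` for classes
and samples indexed by arbitrary types and vectors in an arbitrary real inner product space. It is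
`0` by convention when there are no pairs of distinct classes or no samples. -/
noncomputable def minMargin (W : ι → E) (H : ι → κ → E) : ℝ :=
  sInf {x : ℝ | ∃ k i j, j ≠ k ∧ x = ⟪W k - W j, H k i⟫}

theorem minMargin_le [Finite ι] [Finite κ] (W : ι → E) (H : ι → κ → E) (k : ι) (i : κ) (j : ι)
    (hj : j ≠ k) : minMargin W H ≤ ⟪W k - W j, H k i⟫ := by
  refine csInf_le (Set.Finite.bddBelow ?_) ⟨k, i, j, hj, rfl⟩
  refine (Set.finite_range fun p : ι × κ × ι => ⟪W p.1 - W p.2.2, H p.1 p.2.1⟫).subset ?_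
  rintro x ⟨k, i, j, -, rfl⟩
  exact ⟨(k, i, j), rfl⟩

theorem minMargin_eq_of_forall_eq [Nontrivial ι] [Nonempty κ] {W : ι → E} {H : ι → κ → E} {c : ℝ}
    (h : ∀ k i j, j ≠ k → ⟪W k - W j, H k i⟫ = c) : minMargin W H = c := by
  have margins_eq : {x : ℝ | ∃ k i j, j ≠ k ∧ x = ⟪W k - W j, H k i⟫} = {c} := by
    refine Set.eq_singleton_iff_unique_mem.mpr ⟨?_, ?_⟩
    · obtain ⟨k, j, hkj⟩ := exists_pair_ne ι
      obtain ⟨i⟩ := ‹Nonempty κ›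
      exact ⟨k, i, j, hkj.symm, (h k i j hkj.symm).symm⟩
    · rintro x ⟨k, i, j, hj, rfl⟩
      exact h k i j hj
  rw [minMargin, margins_eq, csInf_singleton]

theorem margin_eq_div_sqrt_iff_of_forall_eq_sqrt_smul [Fintype κ] [Nonempty κ] {W : ι → E}
    {H : ι → κ → E} (h : ∀ k i, W k = √(Fintype.card κ) • H k i) (t : ℝ) :
    (∀ k i j, j ≠ k → ⟪W k - W j, H k i⟫ = t / √(Fintype.card κ)) ↔
      ∀ k j, j ≠ k → ⟪W k - W j, W k⟫ = t := by
  have sqrt_ne_zero : √(Fintype.card κ) ≠ 0 :=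
    (Real.sqrt_pos.mpr (Nat.cast_pos.mpr Fintype.card_pos)).ne'
  have margin_eq_iff (k : ι) (i : κ) (j : ι) :
      ⟪W k - W j, H k i⟫ = t / √(Fintype.card κ) ↔ ⟪W k - W j, W k⟫ = t := by
    rw [eq_div_iff sqrt_ne_zero, mul_comm, ← real_inner_smul_right, ← h k i]
  simp only [margin_eq_iff, forall_const]

variable [Fintype ι]

/-- The family `W` translated so that its mean is zero; centering is what turns a sum of margins
into a single inner product. -/
noncomputable def centered (W : ι → E) (k : ι) : E :=
  W k - (Fintype.card ι : ℝ)⁻¹ • ∑ j, W j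

theorem centered_eq_self_of_sum_eq_zero {W : ι → E} (hW : ∑ j, W j = 0) (k : ι) :
    centered W k = W k := by
  rw [centered, hW, smul_zero, sub_zero]

theorem sum_inner_sub_eq_card_mul_inner_centered (W : ι → E) (k : ι) (x : E) :
    ∑ j, ⟪W k - W j, x⟫ = Fintype.card ι * ⟪centered W k, x⟫ := by
  have : Nonempty ι := ⟨k⟩
  have card_ne_zero : (Fintype.card ι : ℝ) ≠ 0 := Nat.cast_ne_zero.mpr Fintype.card_ne_zero
  rw [← sum_inner, ← real_inner_smul_left, sum_sub_distrib, sum_const, card_univ, centered,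
    smul_sub, smul_inv_smul₀ card_ne_zero, Nat.cast_smul_eq_nsmul]

theorem sum_norm_sq_centered (W : ι → E) :
    ∑ k, ‖centered W k‖ ^ 2 =
      ∑ k, ‖W k‖ ^ 2 - (Fintype.card ι : ℝ)⁻¹ * ‖∑ k, W k‖ ^ 2 := by
  rcases isEmpty_or_nonempty ι with _ | _
  · simp
  have card_ne_zero : (Fintype.card ι : ℝ) ≠ 0 := Nat.cast_ne_zero.mpr Fintype.card_ne_zero
  simp only [centered, norm_sub_sq_real, sum_add_distrib, sum_sub_distrib, ← mul_sum, ← sum_inner,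
    real_inner_smul_right, real_inner_self_eq_norm_sq, norm_smul, mul_pow, Real.norm_eq_abs, sq_abs,
    sum_const, card_univ, nsmul_eq_mul]
  field_simp
  ring

theorem card_mul_norm_sq_of_forall_inner_sub_self_eq {W : ι → E} (hW : ∑ k, W k = 0) {c : ℝ}
    {k : ι} (h : ∀ j, j ≠ k → ⟪W k - W j, W k⟫ = c) :
    Fintype.card ι * ‖W k‖ ^ 2 = ((Fintype.card ι : ℝ) - 1) * c := by
  classical
  have : Nonempty ι := ⟨k⟩
  calc Fintype.card ι * ‖W k‖ ^ 2 = ∑ j, ⟪W k - W j, W k⟫ := by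
        rw [sum_inner_sub_eq_card_mul_inner_centered, centered_eq_self_of_sum_eq_zero hW,
          real_inner_self_eq_norm_sq]
    _ = ∑ j ∈ univ.erase k, ⟪W k - W j, W k⟫ := by
        rw [sum_erase _ (by rw [sub_self, inner_zero_left])]
    _ = ∑ _j ∈ univ.erase k, c := sum_congr rfl fun j hj => h j (ne_of_mem_erase hj)
    _ = ((Fintype.card ι : ℝ) - 1) * c := by
        rw [sum_const, card_erase_of_mem (mem_univ k), card_univ, nsmul_eq_mul,
          Nat.cast_pred Fintype.card_pos]

theorem inner_sub_self_eq_iff_of_sum_eq_zero [Nontrivial ι] {W : ι → E} (hW : ∑ k, W k = 0)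
    (t : ℝ) :
    (∀ k j, j ≠ k → ⟪W k - W j, W k⟫ = t / ((Fintype.card ι : ℝ) - 1)) ↔
      (∀ k, ‖W k‖ ^ 2 = t / Fintype.card ι) ∧
      ∀ k j, k ≠ j → ⟪W k, W j⟫ = -(t / (Fintype.card ι * ((Fintype.card ι : ℝ) - 1))) := by
  have one_lt_card : (1 : ℝ) < Fintype.card ι := Nat.one_lt_cast.mpr Fintype.one_lt_card
  have card_ne_zero : (Fintype.card ι : ℝ) ≠ 0 := by linarith
  have card_sub_one_ne_zero : (Fintype.card ι : ℝ) - 1 ≠ 0 := by linarith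
  have t_split : t / ((Fintype.card ι : ℝ) - 1) =
      t / Fintype.card ι + t / (Fintype.card ι * ((Fintype.card ι : ℝ) - 1)) := by
    field_simp
    ring
  have inner_sub_self (k j : ι) : ⟪W k - W j, W k⟫ = ‖W k‖ ^ 2 - ⟪W k, W j⟫ := by
    rw [inner_sub_left, real_inner_self_eq_norm_sq, real_inner_comm]
  constructor
  · intro h
    have norm_sq (k : ι) : ‖W k‖ ^ 2 = t / Fintype.card ι := by
      rw [eq_div_iff card_ne_zero, mul_comm, card_mul_norm_sq_of_forall_inner_sub_self_eq hW (h k),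
        mul_div_cancel₀ _ card_sub_one_ne_zero]
    refine ⟨norm_sq, fun k j hkj => ?_⟩
    linarith [h k j hkj.symm, inner_sub_self k j, norm_sq k]
  · rintro ⟨norm_sq, inner_eq⟩ k j hj
    rw [inner_sub_self, norm_sq, inner_eq k j hj.symm, t_split, sub_neg_eq_add]

theorem sum_norm_sq_eq_of_forall_eq_sqrt_smul [Fintype κ] [Nonempty κ] {W : ι → E} {H : ι → κ → E}
    (h : ∀ k i, W k = √(Fintype.card κ) • H k i) : ∑ k, ‖W k‖ ^ 2 = ∑ k, ∑ i, ‖H k i‖ ^ 2 := by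
  have card_ne_zero : (Fintype.card κ : ℝ) ≠ 0 := Nat.cast_ne_zero.mpr Fintype.card_ne_zero
  have norm_sq_eq (k : ι) (i : κ) : ‖W k‖ ^ 2 = Fintype.card κ * ‖H k i‖ ^ 2 := by
    rw [h k i, norm_smul, mul_pow, Real.norm_eq_abs, sq_abs, Real.sq_sqrt (Nat.cast_nonneg _)]
  refine sum_congr rfl fun k _ => mul_left_cancel₀ card_ne_zero ?_
  calc Fintype.card κ * ‖W k‖ ^ 2 = ∑ _i : κ, ‖W k‖ ^ 2 := by
        rw [sum_const, card_univ, nsmul_eq_mul]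
    _ = Fintype.card κ * ∑ i, ‖H k i‖ ^ 2 := by
        rw [mul_sum]
        exact sum_congr rfl fun i _ => norm_sq_eq k i

variable [Fintype κ]

/-- The quantity `‖W‖_F² + ‖H‖_F²` of the paper, which `minMargin` is compared with. -/
noncomputable def energy (W : ι → E) (H : ι → κ → E) : ℝ :=
  ∑ k, ‖W k‖ ^ 2 + ∑ k, ∑ i, ‖H k i‖ ^ 2

theorem sum_margins_add_defects (W : ι → E) (H : ι → κ → E) (r : ℝ) :
    2 * r * ∑ k, ∑ i, ∑ j, ⟪W k - W j, H k i⟫ + Fintype.card κ * ‖∑ k, W k‖ ^ 2 +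
        Fintype.card ι * ∑ k, ∑ i, ‖centered W k - r • H k i‖ ^ 2 =
      Fintype.card ι * (Fintype.card κ * ∑ k, ‖W k‖ ^ 2 + r ^ 2 * ∑ k, ∑ i, ‖H k i‖ ^ 2) := by
  rcases isEmpty_or_nonempty ι with _ | _
  · simp
  have card_ne_zero : (Fintype.card ι : ℝ) ≠ 0 := Nat.cast_ne_zero.mpr Fintype.card_ne_zero
  have polarization (k : ι) (i : κ) : ‖centered W k - r • H k i‖ ^ 2 =
      ‖centered W k‖ ^ 2 - 2 * r * ⟪centered W k, H k i⟫ + r ^ 2 * ‖H k i‖ ^ 2 := by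
    rw [norm_sub_sq_real, real_inner_smul_right, norm_smul, mul_pow, Real.norm_eq_abs, sq_abs,
      mul_assoc]
  simp only [sum_inner_sub_eq_card_mul_inner_centered, polarization, sum_add_distrib,
    sum_sub_distrib, ← mul_sum, sum_const, card_univ, nsmul_eq_mul, sum_norm_sq_centered]
  field_simp
  ring

theorem sum_excess_margins [DecidableEq ι] (W : ι → E) (H : ι → κ → E) (q : ℝ) :
    ∑ k, ∑ i, ∑ j ∈ univ.erase k, (⟪W k - W j, H k i⟫ - q) =
      ∑ k, ∑ i, ∑ j, ⟪W k - W j, H k i⟫ -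
        Fintype.card ι * (Fintype.card κ * (((Fintype.card ι : ℝ) - 1) * q)) := by
  have excess_eq (k : ι) (i : κ) : ∑ j ∈ univ.erase k, (⟪W k - W j, H k i⟫ - q) =
      ∑ j, ⟪W k - W j, H k i⟫ - ((Fintype.card ι : ℝ) - 1) * q := by
    have : Nonempty ι := ⟨k⟩
    rw [sum_sub_distrib, sum_erase _ (by rw [sub_self, inner_zero_left]), sum_const,
      card_erase_of_mem (mem_univ k), card_univ, nsmul_eq_mul, Nat.cast_pred Fintype.card_pos]
  simp only [excess_eq, sum_sub_distrib, sum_const, card_univ, nsmul_eq_mul]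

theorem excess_add_defects_eq [DecidableEq ι] (W : ι → E) (H : ι → κ → E) (q : ℝ) :
    2 * √(Fintype.card κ) * ∑ k, ∑ i, ∑ j ∈ univ.erase k, (⟪W k - W j, H k i⟫ - q) +
        Fintype.card κ * ‖∑ k, W k‖ ^ 2 +
        Fintype.card ι * ∑ k, ∑ i, ‖centered W k - √(Fintype.card κ) • H k i‖ ^ 2 =
      Fintype.card ι * Fintype.card κ *
        (energy W H - 2 * ((Fintype.card ι : ℝ) - 1) * √(Fintype.card κ) * q) := by
  have defects := sum_margins_add_defects W H √(Fintype.card κ)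
  rw [Real.sq_sqrt (Nat.cast_nonneg _)] at defects
  rw [sum_excess_margins, energy]
  linear_combination defects

theorem excess_and_defects_eq_zero_of_forall_le_margin [DecidableEq ι] [Nonempty ι] [Nonempty κ]
    {W : ι → E} {H : ι → κ → E} {q : ℝ} (hq : ∀ k i j, j ≠ k → q ≤ ⟪W k - W j, H k i⟫)
    (henergy : 2 * ((Fintype.card ι : ℝ) - 1) * √(Fintype.card κ) * q = energy W H) :
    ∑ k, ∑ i, ∑ j ∈ univ.erase k, (⟪W k - W j, H k i⟫ - q) = 0 ∧
      ‖∑ k, W k‖ ^ 2 = 0 ∧ ∑ k, ∑ i, ‖centered W k - √(Fintype.card κ) • H k i‖ ^ 2 = 0 := by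
  have scaled_excess_nonneg : 0 ≤ 2 * √(Fintype.card κ) *
      ∑ k, ∑ i, ∑ j ∈ univ.erase k, (⟪W k - W j, H k i⟫ - q) :=
    mul_nonneg (by positivity) <| sum_nonneg fun k _ => sum_nonneg fun i _ => sum_nonneg
      fun j hj => sub_nonneg.mpr (hq k i j (ne_of_mem_erase hj))
  have decomposition := excess_add_defects_eq W H q
  rw [henergy, sub_self, mul_zero,
    add_eq_zero_iff_of_nonneg (add_nonneg scaled_excess_nonneg (by positivity)) (by positivity),
    add_eq_zero_iff_of_nonneg scaled_excess_nonneg (by positivity)] at decomposition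
  obtain ⟨⟨excess_zero, sum_zero⟩, misalignment_zero⟩ := decomposition
  exact ⟨(mul_eq_zero.mp excess_zero).resolve_left (by positivity),
    (mul_eq_zero.mp sum_zero).resolve_left (by positivity),
    (mul_eq_zero.mp misalignment_zero).resolve_left (by positivity)⟩

theorem sum_eq_zero_and_aligned_and_margin_eq_of_forall_le_margin [Nonempty ι] [Nonempty κ]
    {W : ι → E} {H : ι → κ → E} {q : ℝ} (hq : ∀ k i j, j ≠ k → q ≤ ⟪W k - W j, H k i⟫)
    (henergy : 2 * ((Fintype.card ι : ℝ) - 1) * √(Fintype.card κ) * q = energy W H) :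
    ∑ k, W k = 0 ∧ (∀ k i, W k = √(Fintype.card κ) • H k i) ∧
      ∀ k i j, j ≠ k → ⟪W k - W j, H k i⟫ = q := by
  classical
  obtain ⟨excess_zero, norm_sq_sum_zero, misalignment_zero⟩ :=
    excess_and_defects_eq_zero_of_forall_le_margin hq henergy
  have sum_eq_zero : ∑ k, W k = 0 := norm_eq_zero.mp (sq_eq_zero_iff.mp norm_sq_sum_zero)
  refine ⟨sum_eq_zero, fun k i => ?_, fun k i j hj => ?_⟩
  · have misalignment_sq_zero :=
      eq_zero_of_sum_sum_eq_zero (fun _ _ => sq_nonneg _) misalignment_zero k i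
    rwa [sq_eq_zero_iff, norm_eq_zero, centered_eq_self_of_sum_eq_zero sum_eq_zero, sub_eq_zero]
      at misalignment_sq_zero
  · have excess_nonneg (k : ι) (i : κ) : ∀ j ∈ univ.erase k, 0 ≤ ⟪W k - W j, H k i⟫ - q :=
      fun j hj => sub_nonneg.mpr (hq k i j (ne_of_mem_erase hj))
    have excess_sum_zero :=
      eq_zero_of_sum_sum_eq_zero (fun k i => sum_nonneg (excess_nonneg k i)) excess_zero k i
    exact sub_eq_zero.mp ((sum_eq_zero_iff_of_nonneg (excess_nonneg k i)).mp excess_sum_zero j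
      (mem_erase.mpr ⟨hj, mem_univ j⟩))

theorem minMargin_eq_energy_div_iff [Nontrivial ι] [Nonempty κ] (W : ι → E) (H : ι → κ → E) :
    minMargin W H = energy W H / (2 * ((Fintype.card ι : ℝ) - 1) * √(Fintype.card κ)) ↔
      ∑ k, W k = 0 ∧ (∀ k i, W k = √(Fintype.card κ) • H k i) ∧
      ∀ k i j, j ≠ k → ⟪W k - W j, H k i⟫ =
        energy W H / (2 * ((Fintype.card ι : ℝ) - 1) * √(Fintype.card κ)) := by
  constructor
  · intro heq
    have one_lt_card : (1 : ℝ) < Fintype.card ι := Nat.one_lt_cast.mpr Fintype.one_lt_card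
    have card_pos : (0 : ℝ) < Fintype.card κ := Nat.cast_pos.mpr Fintype.card_pos
    have factor_pos : 0 < 2 * ((Fintype.card ι : ℝ) - 1) * √(Fintype.card κ) :=
      mul_pos (by linarith) (Real.sqrt_pos.mpr card_pos)
    rw [← heq]
    refine sum_eq_zero_and_aligned_and_margin_eq_of_forall_le_margin (minMargin_le W H) ?_
    rw [heq, mul_div_cancel₀ _ factor_pos.ne']
  · rintro ⟨-, -, margins_eq⟩
    exact minMargin_eq_of_forall_eq margins_eq

theorem margin_equality_iff_general [Nontrivial ι] [Nonempty κ] (W : ι → E) (H : ι → κ → E) :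
    (minMargin W H = energy W H / (2 * ((Fintype.card ι : ℝ) - 1) * √(Fintype.card κ)) ↔
      ((∑ k, W k = 0) ∧
       (∀ k i, W k = √(Fintype.card κ) • H k i) ∧
       (∀ k, ‖W k‖ ^ 2 = energy W H / (2 * (Fintype.card ι : ℝ))) ∧
       (∀ k j, k ≠ j → ⟪W k, W j⟫ =
         -(energy W H / (2 * (Fintype.card ι : ℝ) * ((Fintype.card ι : ℝ) - 1))))))
    ∧
    (minMargin W H = energy W H / (2 * ((Fintype.card ι : ℝ) - 1) * √(Fintype.card κ)) →
      ∑ k, ‖W k‖ ^ 2 = ∑ k, ∑ i, ‖H k i‖ ^ 2) := by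
  rw [minMargin_eq_energy_div_iff]
  refine ⟨and_congr_right fun hsum => and_congr_right fun halign => ?_, fun ⟨_, halign, _⟩ =>
    sum_norm_sq_eq_of_forall_eq_sqrt_smul halign⟩
  have gram := inner_sub_self_eq_iff_of_sum_eq_zero hsum (energy W H / 2)
  rw [← margin_eq_div_sqrt_iff_of_forall_eq_sqrt_smul halign] at gram
  simpa only [div_div, mul_assoc] using gram

end

theorem margin_equality_iff {K n d : ℕ} (hK : 2 ≤ K) (hn : 1 ≤ n) (hd : 1 ≤ d)
    (W : Fin K → EuclideanSpace ℝ (Fin d)) (H : Fin K → Fin n → EuclideanSpace ℝ (Fin d)) :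
    (qmin W H = (WF2 W + HF2 H) / (2 * ((K : ℝ) - 1) * Real.sqrt n) ↔
      ((∑ k, W k = 0) ∧
       (∀ k i, W k = Real.sqrt n • H k i) ∧
       (∀ k, ‖W k‖ ^ 2 = (WF2 W + HF2 H) / (2 * (K : ℝ))) ∧
       (∀ k j, k ≠ j → ⟪W k, W j⟫ = -((WF2 W + HF2 H) / (2 * (K : ℝ) * ((K : ℝ) - 1))))))
    ∧
    (qmin W H = (WF2 W + HF2 H) / (2 * ((K : ℝ) - 1) * Real.sqrt n) →
      Real.sqrt (WF2 W) = Real.sqrt (HF2 H)) := by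
  have : Nontrivial (Fin K) := Fin.nontrivial_iff_two_le.mpr hK
  have : Nonempty (Fin n) := ⟨⟨0, hn⟩⟩
  have general := margin_equality_iff_general W H
  simp only [Fintype.card_fin] at general
  exact ⟨general.1, fun hq => congrArg Real.sqrt (general.2 hq)⟩
end

section
/- Suppose (W,H) satisfies the neural collapse conditions with w_k = √n·h̄_k for every k (equivalently, with ‖W‖_F = ‖H‖_F). Then (W,H) minimizes the cross-entropy loss on its sphere: L(W,H) ≤ L(W',H') for every (W',H') with ‖W'‖_F² + ‖H'‖_F² = ‖W‖_F² + ‖H‖_F². -/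
open scoped BigOperators RealInnerProductSpace
open Finset

/-- The neural collapse conditions (NC-a)–(NC-d). -/
def NeuralCollapse {K n d : ℕ} (W : Fin K → EuclideanSpace ℝ (Fin d))
    (H : Fin K → Fin n → EuclideanSpace ℝ (Fin d)) : Prop :=
  -- (NC-a) variability collapse
  (∀ k i i', H k i = H k i') ∧
  -- (NC-b)
  (∑ k, W k) = 0 ∧ (∀ k k', ‖W k‖ = ‖W k'‖) ∧
  (∀ k k' i i', ‖H k i‖ = ‖H k' i'‖) ∧ (∀ k i, H k i ≠ 0) ∧
  -- (NC-c)
  (∀ k j, k ≠ j → ∀ i i', ⟪H k i, H j i'⟫ = -(‖H k i‖ * ‖H j i'‖) / ((K : ℝ) - 1)) ∧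
  -- (NC-d)
  (∃ C : ℝ, 0 < C ∧ ∀ k i, W k = C • H k i)

/-!
Only the total margin `∑ s_{k,i,j}` matters. Since `s_{k,i,k} = 0`, the loss is a sum of
log-sum-exps of the negated margins, and where all off-diagonal margins agree its gradient weighs
them all equally; by convexity, such a configuration minimizes the loss among those with at most
the same total margin. Completing the square, the total margin equals
`(K √n / 2) (‖W‖² + ‖H‖²)` minus a sum of squares measuring the failure of `∑ k, w_k = 0` and
of `w_k = √n h_{k,i}`, so under neural collapse it is the largest possible on the sphere.
-/

theorem log_sum_exp_add_le_log_sum_exp {ι : Type*} {t : Finset ι} (ht : t.Nonempty) (x y : ι → ℝ) :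
    Real.log (∑ i ∈ t, Real.exp (y i)) +
        (∑ i ∈ t, Real.exp (y i))⁻¹ * ∑ i ∈ t, Real.exp (y i) * (x i - y i) ≤
      Real.log (∑ i ∈ t, Real.exp (x i)) := by
  set Z := ∑ i ∈ t, Real.exp (y i)
  have hZ : 0 < Z := sum_pos (fun i _ ↦ Real.exp_pos (y i)) ht
  have jensen : Real.exp (Z⁻¹ * ∑ i ∈ t, Real.exp (y i) * (x i - y i)) ≤
      Z⁻¹ * ∑ i ∈ t, Real.exp (x i) := by
    simpa [centerMass, Z, ← Real.exp_add] using
      convexOn_exp.map_centerMass_le (p := fun i ↦ x i - y i)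
        (fun i _ ↦ (Real.exp_pos (y i)).le) hZ (fun _ _ ↦ Set.mem_univ _)
  rw [← Real.log_exp (Z⁻¹ * _), ← Real.log_mul hZ.ne' (Real.exp_pos _).ne']
  exact Real.log_le_log (by positivity) ((le_inv_mul_iff₀ hZ).mp jensen)

section CrossEntropy

variable {ι κ : Type*} [Fintype ι]

/-- The cross-entropy loss as a function of an array of margins `s k i j`, for the sample `i` of
class `k` against class `j`; the diagonal entries `s k i k` are ignored. -/
noncomputable def crossEntropy [DecidableEq ι] [Fintype κ] (s : ι → κ → ι → ℝ) : ℝ :=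
  ∑ k, ∑ i, Real.log (1 + ∑ j with j ≠ k, Real.exp (-s k i j))

theorem one_add_sum_ne_exp_neg [DecidableEq ι] {f : ι → ℝ} {k : ι} (hf : f k = 0) :
    1 + ∑ j with j ≠ k, Real.exp (-f j) = ∑ j, Real.exp (-f j) := by
  rw [filter_ne', ← add_sum_erase univ _ (mem_univ k), hf, neg_zero, Real.exp_zero]

theorem sum_exp_neg_eq_of_const_off {f : ι → ℝ} {k : ι} {a : ℝ} (hf : f k = 0)
    (ha : ∀ j, j ≠ k → f j = a) :
    ∑ j, Real.exp (-f j) = 1 + (Fintype.card ι - 1 : ℕ) * Real.exp (-a) := by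
  classical
  have hsum : ∑ j ∈ univ.erase k, Real.exp (-f j) = ∑ _j ∈ univ.erase k, Real.exp (-a) :=
    sum_congr rfl fun j hj ↦ by rw [ha j (ne_of_mem_erase hj)]
  rw [← one_add_sum_ne_exp_neg hf, filter_ne', hsum, sum_const, card_erase_of_mem (mem_univ k),
    card_univ, nsmul_eq_mul]

theorem log_sum_exp_neg_add_le_of_const_off {f g : ι → ℝ} {k : ι} {a : ℝ} (hf : f k = 0)
    (hg : g k = 0) (ha : ∀ j, j ≠ k → f j = a) :
    Real.log (∑ j, Real.exp (-f j)) +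
        (1 + (Fintype.card ι - 1 : ℕ) * Real.exp (-a))⁻¹ * (Real.exp (-a) * ∑ j, (f j - g j)) ≤
      Real.log (∑ j, Real.exp (-g j)) := by
  have hgrad : ∑ j, Real.exp (-f j) * (-g j - -f j) = Real.exp (-a) * ∑ j, (f j - g j) := by
    rw [mul_sum]
    refine sum_congr rfl fun j _ ↦ ?_
    obtain rfl | hj := eq_or_ne j k
    · simp only [hf, hg, sub_self, mul_zero]
    · rw [ha j hj, neg_sub_neg]
  rw [← hgrad, ← sum_exp_neg_eq_of_const_off hf ha]
  exact log_sum_exp_add_le_log_sum_exp ⟨k, mem_univ k⟩ (fun j ↦ -g j) (fun j ↦ -f j)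

theorem crossEntropy_le_of_sum_le [DecidableEq ι] [Fintype κ] {s s' : ι → κ → ι → ℝ} {a : ℝ}
    (hs : ∀ k i, s k i k = 0) (hs' : ∀ k i, s' k i k = 0)
    (ha : ∀ k i j, j ≠ k → s k i j = a)
    (hle : ∑ k, ∑ i, ∑ j, s' k i j ≤ ∑ k, ∑ i, ∑ j, s k i j) :
    crossEntropy s ≤ crossEntropy s' := by
  set c := (1 + (Fintype.card ι - 1 : ℕ) * Real.exp (-a))⁻¹ * Real.exp (-a)
  have hgain : 0 ≤ c * ∑ k, ∑ i, ∑ j, (s k i j - s' k i j) := by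
    simp only [sum_sub_distrib]
    exact mul_nonneg (by positivity) (sub_nonneg.mpr hle)
  calc crossEntropy s
      ≤ crossEntropy s + c * ∑ k, ∑ i, ∑ j, (s k i j - s' k i j) := le_add_of_nonneg_right hgain
    _ = ∑ k, ∑ i, (Real.log (∑ j, Real.exp (-s k i j)) + c * ∑ j, (s k i j - s' k i j)) := by
      simp only [crossEntropy, one_add_sum_ne_exp_neg (hs _ _), mul_sum, sum_add_distrib]
    _ ≤ ∑ k, ∑ i, Real.log (∑ j, Real.exp (-s' k i j)) := by
      gcongr with k _ i _
      simpa only [c, mul_assoc] using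
        log_sum_exp_neg_add_le_of_const_off (hs k i) (hs' k i) (ha k i)
    _ = crossEntropy s' := by simp only [crossEntropy, one_add_sum_ne_exp_neg (hs' _ _)]

end CrossEntropy

section Margin

variable {ι κ E : Type*} [NormedAddCommGroup E] [InnerProductSpace ℝ E]

/-- The margin `s_{k,i,j} = ⟨w_k - w_j, h_{k,i}⟩` of the classifier `W` on the features `H`, over
arbitrary index types and an arbitrary real inner product space. -/
noncomputable def margin (W : ι → E) (H : ι → κ → E) (k : ι) (i : κ) (j : ι) : ℝ :=
  ⟪W k - W j, H k i⟫

theorem margin_self (W : ι → E) (H : ι → κ → E) (k : ι) (i : κ) : margin W H k i k = 0 := by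
  rw [margin, sub_self, inner_zero_left]

theorem sum_inner_eq_sub_sum_norm_sub_sq [Fintype κ] (x : E) (h : κ → E) :
    ∑ i, ⟪x, h i⟫ = √(Fintype.card κ) / 2 * (‖x‖ ^ 2 + ∑ i, ‖h i‖ ^ 2) -
      (∑ i, ‖x - √(Fintype.card κ) • h i‖ ^ 2) / (2 * √(Fintype.card κ)) := by
  obtain hκ | hκ := isEmpty_or_nonempty κ
  · simp
  set r := √(Fintype.card κ : ℝ)
  have hr : 0 < r := Real.sqrt_pos.mpr (Nat.cast_pos.mpr Fintype.card_pos)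
  have hrr : (Fintype.card κ : ℝ) = r ^ 2 := (Real.sq_sqrt (Nat.cast_nonneg _)).symm
  have hsq : ∑ i, ‖x - r • h i‖ ^ 2 =
      r ^ 2 * ‖x‖ ^ 2 - 2 * r * ∑ i, ⟪x, h i⟫ + r ^ 2 * ∑ i, ‖h i‖ ^ 2 := by
    simp only [norm_sub_sq_real, real_inner_smul_right, norm_smul, mul_pow, Real.norm_eq_abs,
      sq_abs, sum_add_distrib, sum_sub_distrib, sum_const, card_univ, nsmul_eq_mul, hrr, mul_sum,
      mul_assoc]
  rw [hsq]
  field_simp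
  ring

variable [Fintype ι]

theorem sum_norm_sub_sq_eq {W : ι → E} {c : E} (hc : ∑ k, W k = (Fintype.card ι : ℝ) • c) :
    ∑ k, ‖W k - c‖ ^ 2 = ∑ k, ‖W k‖ ^ 2 - Fintype.card ι * ‖c‖ ^ 2 := by
  have hinner : ∑ k, ⟪W k, c⟫ = Fintype.card ι * ‖c‖ ^ 2 := by
    rw [← sum_inner, hc, real_inner_smul_left, real_inner_self_eq_norm_sq]
  simp only [norm_sub_sq_real, sum_add_distrib, sum_sub_distrib, ← mul_sum, hinner, sum_const,
    card_univ, nsmul_eq_mul]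
  ring

theorem sum_margin_eq_card_mul_inner {W : ι → E} {c : E}
    (hc : ∑ k, W k = (Fintype.card ι : ℝ) • c) (H : ι → κ → E) (k : ι) (i : κ) :
    ∑ j, margin W H k i j = Fintype.card ι * ⟪W k - c, H k i⟫ := by
  simp only [margin]
  rw [← sum_inner, sum_sub_distrib, hc, sum_const, card_univ, ← Nat.cast_smul_eq_nsmul ℝ,
    ← smul_sub, real_inner_smul_left]

variable [Fintype κ]

theorem sum_margin_eq_sub {W : ι → E} {c : E} (hc : ∑ k, W k = (Fintype.card ι : ℝ) • c)
    (H : ι → κ → E) :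
    ∑ k, ∑ i, ∑ j, margin W H k i j =
      Fintype.card ι * √(Fintype.card κ) / 2 * (∑ k, ‖W k‖ ^ 2 + ∑ k, ∑ i, ‖H k i‖ ^ 2) -
        (Fintype.card ι ^ 2 * √(Fintype.card κ) / 2 * ‖c‖ ^ 2 +
          Fintype.card ι / (2 * √(Fintype.card κ)) *
            ∑ k, ∑ i, ‖W k - c - √(Fintype.card κ) • H k i‖ ^ 2) := by
  simp only [sum_margin_eq_card_mul_inner hc, ← mul_sum, sum_inner_eq_sub_sum_norm_sub_sq,
    sum_sub_distrib, sum_add_distrib, ← sum_div, sum_norm_sub_sq_eq hc]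
  ring

theorem sum_margin_le (W : ι → E) (H : ι → κ → E) :
    ∑ k, ∑ i, ∑ j, margin W H k i j ≤
      Fintype.card ι * √(Fintype.card κ) / 2 * (∑ k, ‖W k‖ ^ 2 + ∑ k, ∑ i, ‖H k i‖ ^ 2) := by
  obtain hι | hι := isEmpty_or_nonempty ι
  · simp
  have hmean : ∑ k, W k = (Fintype.card ι : ℝ) • (Fintype.card ι : ℝ)⁻¹ • ∑ k, W k :=
    (smul_inv_smul₀ (Nat.cast_ne_zero.mpr Fintype.card_ne_zero) _).symm
  rw [sum_margin_eq_sub hmean]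
  exact sub_le_self _ (by positivity)

theorem sum_margin_eq {W : ι → E} {H : ι → κ → E} (hW : ∑ k, W k = 0)
    (hWH : ∀ k i, W k = √(Fintype.card κ) • H k i) :
    ∑ k, ∑ i, ∑ j, margin W H k i j =
      Fintype.card ι * √(Fintype.card κ) / 2 * (∑ k, ‖W k‖ ^ 2 + ∑ k, ∑ i, ‖H k i‖ ^ 2) := by
  have hdefect (k : ι) (i : κ) : ‖W k - √(Fintype.card κ) • H k i‖ ^ 2 = 0 := by
    rw [← hWH, sub_self, norm_zero, zero_pow two_ne_zero]
  rw [sum_margin_eq_sub (c := 0) (by rw [hW, smul_zero])]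
  simp only [hdefect, norm_zero, sum_const_zero, mul_zero, add_zero, sub_zero, zero_pow two_ne_zero]

end Margin

theorem NeuralCollapse.margin_eq {K n d : ℕ} {W : Fin K → EuclideanSpace ℝ (Fin d)}
    {H : Fin K → Fin n → EuclideanSpace ℝ (Fin d)} (hNC : NeuralCollapse W H)
    (hWH : ∀ k i, W k = √n • H k i) (k₀ : Fin K) (i₀ : Fin n) {k j : Fin K} (i : Fin n)
    (hjk : j ≠ k) :
    margin W H k i j = √n * (‖H k₀ i₀‖ ^ 2 + ‖H k₀ i₀‖ ^ 2 / ((K : ℝ) - 1)) := by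
  obtain ⟨-, -, -, hnorm, -, hinner, -⟩ := hNC
  rw [margin, hWH k i, hWH j i, ← smul_sub, real_inner_smul_left, inner_sub_left,
    real_inner_self_eq_norm_sq, hinner j k hjk i i, hnorm j k₀ i i₀, hnorm k k₀ i i₀]
  ring

theorem neural_collapse_is_optimal_on_sphere_general {ι κ E : Type*} [Fintype ι] [DecidableEq ι]
    [Fintype κ] [NormedAddCommGroup E] [InnerProductSpace ℝ E]
    {W : ι → E} {H : ι → κ → E} {a : ℝ} (hW : ∑ k, W k = 0)
    (hWH : ∀ k i, W k = √(Fintype.card κ) • H k i)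
    (ha : ∀ k i j, j ≠ k → margin W H k i j = a) (W' : ι → E) (H' : ι → κ → E)
    (hball : ∑ k, ‖W' k‖ ^ 2 + ∑ k, ∑ i, ‖H' k i‖ ^ 2 ≤
      ∑ k, ‖W k‖ ^ 2 + ∑ k, ∑ i, ‖H k i‖ ^ 2) :
    crossEntropy (margin W H) ≤ crossEntropy (margin W' H') := by
  refine crossEntropy_le_of_sum_le (margin_self W H) (margin_self W' H') ha ?_
  rw [sum_margin_eq hW hWH]
  exact (sum_margin_le W' H').trans (by gcongr)

theorem neural_collapse_is_optimal_on_sphere {K n d : ℕ}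
    (hK : 2 ≤ K) (hn : 1 ≤ n) (hd : 1 ≤ d)
    (W : Fin K → EuclideanSpace ℝ (Fin d)) (H : Fin K → Fin n → EuclideanSpace ℝ (Fin d))
    (hNC : NeuralCollapse W H) (hWH : ∀ k i, W k = Real.sqrt n • H k i) :
    ∀ (W' : Fin K → EuclideanSpace ℝ (Fin d)) (H' : Fin K → Fin n → EuclideanSpace ℝ (Fin d)),
      WF2 W' + HF2 H' = WF2 W + HF2 H → LWH W H ≤ LWH W' H' := by
  intro W' H' hsphere
  exact neural_collapse_is_optimal_on_sphere_general (H := H) hNC.2.1 (by simpa using hWH)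
    (fun k i j hjk ↦ hNC.margin_eq hWH ⟨0, Nat.zero_lt_of_lt hK⟩ ⟨0, hn⟩ i hjk) W' H' hsphere.le
end

section
/- Assume d ≥ K−1, (W,H) ≠ (0,0), and L(W,H) ≤ L(W',H') for every (W',H') with ‖W'‖_F² + ‖H'‖_F² = ‖W‖_F² + ‖H‖_F². Then (W,H) satisfies the neural collapse conditions with w_k = √n·h̄_k for every k; in particular ‖W‖_F = ‖H‖_F. -/
open scoped BigOperators RealInnerProductSpace
open Finset

/-!
Put `a = (‖W‖_F² + ‖H‖_F²) / (2 (K - 1))` and `c = a / √n`. By Jensen's inequality the function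
`log ∑ exp` lies above its tangent hyperplanes. Taking the tangent at the logits with all margins
equal to `c` bounds the loss of every sample below by an affine function of its margins. Summed over
all samples, the sum of the margins completes to squares on the sphere, so that with `p` the softmax
probability of a wrong class and `m` the mean of the `w_k`,

    L(W, H) ≥ K n log (1 + (K - 1) exp (-c))
      + p K / (2 √n) * (∑_{k,i} ‖w_k - m - √n h_{k,i}‖² + n K ‖m‖²).

Simplex frames with `w_k = √n h_{k,i}`, which exist as soon as `d ≥ K - 1`, attain the leading term.
A minimizer therefore has `m = 0`, `w_k = √n h_{k,i}` and, by strict convexity of `exp`, all margins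
equal to `c`. These margins determine the Gram matrix of the `w_k`, which is that of a simplex
frame.
-/

section LogSumExp

variable {ι : Type*} [Fintype ι]

/-- The softmax probability vector of the logits `y`, i.e. the gradient of `log ∑ exp` at `y`. -/
noncomputable def softmax (y : ι → ℝ) (j : ι) : ℝ :=
  Real.exp (y j) / ∑ i, Real.exp (y i)

variable [Nonempty ι] (x y : ι → ℝ)

lemma sum_exp_pos : 0 < ∑ j, Real.exp (y j) :=
  Finset.sum_pos (fun j _ => Real.exp_pos (y j)) univ_nonempty

lemma softmax_pos (j : ι) : 0 < softmax y j :=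
  div_pos (Real.exp_pos _) (sum_exp_pos y)

lemma sum_softmax : ∑ j, softmax y j = 1 := by
  simp only [softmax]
  rw [← Finset.sum_div, div_self (sum_exp_pos y).ne']

lemma exp_log_sum_exp_sub_log_sum_exp :
    Real.exp (Real.log (∑ j, Real.exp (x j)) - Real.log (∑ j, Real.exp (y j))) =
      ∑ j, softmax y j * Real.exp (x j - y j) := by
  rw [Real.exp_sub, Real.exp_log (sum_exp_pos x), Real.exp_log (sum_exp_pos y), Finset.sum_div]
  refine Finset.sum_congr rfl fun j _ => ?_
  rw [softmax, Real.exp_sub]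
  field_simp

theorem log_sum_exp_add_sum_softmax_mul_sub_le :
    Real.log (∑ j, Real.exp (y j)) + ∑ j, softmax y j * (x j - y j) ≤
      Real.log (∑ j, Real.exp (x j)) := by
  have jensen := convexOn_exp.map_sum_le (t := univ) (p := fun j => x j - y j)
    (fun j _ => (softmax_pos y j).le) (sum_softmax y) fun _ _ => Set.mem_univ _
  simp only [smul_eq_mul] at jensen
  rw [← exp_log_sum_exp_sub_log_sum_exp, Real.exp_le_exp] at jensen
  linarith

variable {x y} in
theorem sub_eq_sub_of_log_sum_exp_le (h : Real.log (∑ j, Real.exp (x j)) ≤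
    Real.log (∑ j, Real.exp (y j)) + ∑ j, softmax y j * (x j - y j)) (i j : ι) :
    x i - y i = x j - y j := by
  refine strictConvexOn_exp.eq_of_le_map_sum (p := fun j => x j - y j)
    (fun j _ => softmax_pos y j) (sum_softmax y) (fun _ _ => Set.mem_univ _) ?_
    (mem_univ i) (mem_univ j)
  simp only [smul_eq_mul]
  rw [← exp_log_sum_exp_sub_log_sum_exp, Real.exp_le_exp]
  linarith

end LogSumExp

section EqualMargins

variable (ι : Type*) [Fintype ι]

/-- The cross-entropy loss of one sample whose margins against all wrong classes equal `c`. -/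
noncomputable def equalMarginLoss (c : ℝ) : ℝ :=
  Real.log (1 + (Fintype.card ι - 1) * Real.exp (-c))

/-- The softmax probability of each wrong class at a sample whose margins against all wrong
classes equal `c`. -/
noncomputable def wrongClassProb (c : ℝ) : ℝ :=
  Real.exp (-c) / (1 + (Fintype.card ι - 1) * Real.exp (-c))

lemma wrongClassProb_pos [Nonempty ι] (c : ℝ) : 0 < wrongClassProb ι c := by
  have hK : (1 : ℝ) ≤ Fintype.card ι := by exact_mod_cast Fintype.card_pos (α := ι)
  have : 0 ≤ (Fintype.card ι - 1) * Real.exp (-c) :=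
    mul_nonneg (sub_nonneg.2 hK) (Real.exp_pos _).le
  exact div_pos (Real.exp_pos _) (by linarith)

variable {ι} [DecidableEq ι]

lemma one_add_sum_filter_ne {M : Type*} [AddCommMonoidWithOne M] {f : ι → M} {k : ι}
    (hf : f k = 1) :
    1 + ∑ j with j ≠ k, f j = ∑ j, f j := by
  rw [Finset.filter_ne', ← hf, Finset.add_sum_erase _ _ (mem_univ k)]

lemma sum_ite_eq_add_card_sub_one_mul {R : Type*} [Ring R] (k : ι) (a b : R) :
    ∑ j, (if j = k then a else b) = a + (Fintype.card ι - 1) * b := by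
  rw [← Finset.add_sum_erase _ _ (mem_univ k), if_pos rfl,
    Finset.sum_congr rfl fun j hj => if_neg (Finset.ne_of_mem_erase hj)]
  simp [Finset.card_erase_of_mem, Nat.cast_sub (Fintype.card_pos_iff.2 ⟨k⟩)]

variable {s : ι → ℝ} {k : ι}

lemma log_sum_exp_equalMargin (c : ℝ) (k : ι) :
    Real.log (∑ j, Real.exp (if j = k then 0 else -c)) = equalMarginLoss ι c := by
  simp only [apply_ite Real.exp, Real.exp_zero, sum_ite_eq_add_card_sub_one_mul, equalMarginLoss]

lemma sum_softmax_equalMargin (hs : s k = 0) (c : ℝ) :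
    ∑ j, softmax (fun j => if j = k then 0 else -c) j * (-s j - if j = k then 0 else -c) =
      wrongClassProb ι c * ((Fintype.card ι - 1) * c - ∑ j, s j) := by
  have hterm (j : ι) :
      softmax (fun j => if j = k then 0 else -c) j * (-s j - if j = k then 0 else -c) =
        wrongClassProb ι c * ((if j = k then 0 else c) - s j) := by
    simp only [softmax, wrongClassProb, apply_ite Real.exp, Real.exp_zero,
      sum_ite_eq_add_card_sub_one_mul]
    split_ifs with hj
    · simp [hj, hs]
    · ring
  rw [Finset.sum_congr rfl fun j _ => hterm j, ← Finset.mul_sum, Finset.sum_sub_distrib,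
    sum_ite_eq_add_card_sub_one_mul, zero_add]

theorem equalMarginLoss_add_le_log_one_add_sum_exp (hs : s k = 0) (c : ℝ) :
    equalMarginLoss ι c + wrongClassProb ι c * ((Fintype.card ι - 1) * c - ∑ j, s j) ≤
      Real.log (1 + ∑ j with j ≠ k, Real.exp (-s j)) := by
  have : Nonempty ι := ⟨k⟩
  rw [one_add_sum_filter_ne (by simp [hs]), ← log_sum_exp_equalMargin c k,
    ← sum_softmax_equalMargin hs]
  exact log_sum_exp_add_sum_softmax_mul_sub_le _ _

theorem eq_of_log_one_add_sum_exp_le (hs : s k = 0) {c : ℝ}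
    (h : Real.log (1 + ∑ j with j ≠ k, Real.exp (-s j)) ≤
      equalMarginLoss ι c + wrongClassProb ι c * ((Fintype.card ι - 1) * c - ∑ j, s j))
    {j : ι} (hj : j ≠ k) : s j = c := by
  have : Nonempty ι := ⟨k⟩
  rw [one_add_sum_filter_ne (by simp [hs]), ← log_sum_exp_equalMargin c k,
    ← sum_softmax_equalMargin hs] at h
  have hjk := sub_eq_sub_of_log_sum_exp_le h j k
  simp only [if_neg hj, if_true, hs] at hjk
  linarith

lemma log_one_add_sum_exp_of_eq {c : ℝ} (h : ∀ j, j ≠ k → s j = c) :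
    Real.log (1 + ∑ j with j ≠ k, Real.exp (-s j)) = equalMarginLoss ι c := by
  rw [← log_sum_exp_equalMargin c k, ← one_add_sum_filter_ne (k := k) (by simp)]
  congr 2
  refine Finset.sum_congr rfl fun j hj => ?_
  have hjk : j ≠ k := (Finset.mem_filter.1 hj).2
  rw [h j hjk, if_neg hjk]

end EqualMargins

section SimplexETF

variable {ι V : Type*} [Fintype ι] [DecidableEq ι] [NormedAddCommGroup V] [InnerProductSpace ℝ V]

/-- `W` is a simplex equiangular tight frame of scale `a`: its Gram matrix is `a` times the
orthogonal projection `I - 𝟙𝟙ᵀ / K` onto the zero-sum vectors, where `K` is the number of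
vectors. -/
def IsSimplexETF (a : ℝ) (W : ι → V) : Prop :=
  ∀ k j, ⟪W k, W j⟫ = a * ((if k = j then 1 else 0) - 1 / Fintype.card ι)

namespace IsSimplexETF

variable {a : ℝ} {W : ι → V}

lemma norm_sq (hW : IsSimplexETF a W) (k : ι) : ‖W k‖ ^ 2 = a * (1 - 1 / Fintype.card ι) := by
  rw [← real_inner_self_eq_norm_sq, hW, if_pos rfl]

lemma sum_norm_sq [Nonempty ι] (hW : IsSimplexETF a W) :
    ∑ k, ‖W k‖ ^ 2 = a * (Fintype.card ι - 1) := by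
  have hK : (Fintype.card ι : ℝ) ≠ 0 := Nat.cast_ne_zero.2 Fintype.card_ne_zero
  simp only [hW.norm_sq, Finset.sum_const, Finset.card_univ, nsmul_eq_mul]
  field_simp

lemma inner_sub_self (hW : IsSimplexETF a W) {k j : ι} (hjk : j ≠ k) :
    ⟪W k - W j, W k⟫ = a := by
  rw [inner_sub_left, hW, hW, if_pos rfl, if_neg hjk]
  ring

lemma norm_eq (hW : IsSimplexETF a W) (k j : ι) : ‖W k‖ = ‖W j‖ := by
  rw [← sq_eq_sq₀ (norm_nonneg _) (norm_nonneg _), hW.norm_sq, hW.norm_sq]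

lemma ne_zero [Nontrivial ι] (hW : IsSimplexETF a W) (ha : a ≠ 0) (k : ι) : W k ≠ 0 := by
  have hK : (1 : ℝ) < Fintype.card ι := by exact_mod_cast Fintype.one_lt_card (α := ι)
  have hK' : (1 : ℝ) / Fintype.card ι < 1 := (div_lt_one (by linarith)).2 hK
  rw [← norm_ne_zero_iff, ← pow_ne_zero_iff two_ne_zero, hW.norm_sq]
  exact mul_ne_zero ha (sub_pos.2 hK').ne'

lemma inner_eq_neg_norm_mul_norm_div (hW : IsSimplexETF a W) {k j : ι}
    (hkj : k ≠ j) : ⟪W k, W j⟫ = -(‖W k‖ * ‖W j‖) / (Fintype.card ι - 1) := by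
  have hK : (1 : ℝ) < Fintype.card ι := by
    exact_mod_cast Fintype.one_lt_card_iff.2 ⟨k, j, hkj⟩
  have hK' : (Fintype.card ι : ℝ) - 1 ≠ 0 := (sub_pos.2 hK).ne'
  rw [hW.norm_eq j k, ← sq, hW.norm_sq, hW, if_neg hkj]
  field_simp
  ring

lemma sum_eq_zero [Nonempty ι] (hW : IsSimplexETF a W) : ∑ k, W k = 0 := by
  rw [← inner_self_eq_zero (𝕜 := ℝ), sum_inner]
  simp only [inner_sum, hW _ _, ← Finset.mul_sum, Finset.sum_sub_distrib, Finset.sum_ite_eq,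
    mem_univ, if_true, Finset.sum_const, Finset.card_univ, nsmul_eq_mul]
  field_simp
  simp

lemma smul (hW : IsSimplexETF a W) (r : ℝ) : IsSimplexETF (r ^ 2 * a) fun k => r • W k := by
  intro k j
  rw [real_inner_smul_left, real_inner_smul_right, hW]
  ring

lemma map {V' : Type*} [NormedAddCommGroup V'] [InnerProductSpace ℝ V'] (hW : IsSimplexETF a W)
    (φ : V →ₗᵢ[ℝ] V') : IsSimplexETF a fun k => φ (W k) := by
  intro k j
  rw [φ.inner_map_map, hW]

end IsSimplexETF

theorem isSimplexETF_of_inner_sub_self {a : ℝ} {W : ι → V} (hsum : ∑ k, W k = 0)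
    (hW : ∀ k j, j ≠ k → ⟪W k - W j, W k⟫ = a) : IsSimplexETF a W := by
  have hinner (k j : ι) : ⟪W k - W j, W k⟫ = if j = k then 0 else a := by
    split_ifs with hjk
    · rw [hjk, sub_self, inner_zero_left]
    · exact hW k j hjk
  have hnorm (k : ι) : Fintype.card ι * ‖W k‖ ^ 2 = (Fintype.card ι - 1) * a := by
    rw [← zero_add (_ * a), ← sum_ite_eq_add_card_sub_one_mul k,
      ← Finset.sum_congr rfl fun j _ => hinner k j, ← sum_inner, Finset.sum_sub_distrib, hsum,
      sub_zero, Finset.sum_const, Finset.card_univ, ← Nat.cast_smul_eq_nsmul ℝ,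
      real_inner_smul_left, real_inner_self_eq_norm_sq]
  intro k j
  have hK : (Fintype.card ι : ℝ) ≠ 0 := Nat.cast_ne_zero.2 (Fintype.card_pos_iff.2 ⟨k⟩).ne'
  have hkj := hinner k j
  rw [inner_sub_left, real_inner_self_eq_norm_sq, real_inner_comm] at hkj
  apply mul_left_cancel₀ hK
  simp only [eq_comm (a := k)]
  split_ifs at hkj ⊢ <;> field_simp <;> linear_combination hnorm k - Fintype.card ι * hkj

end SimplexETF

section StandardSimplex

theorem exists_linearIsometry_of_finrank_le_rank (E : Type*) {V : Type*} [NormedAddCommGroup E]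
    [InnerProductSpace ℝ E] [FiniteDimensional ℝ E] [NormedAddCommGroup V] [InnerProductSpace ℝ V]
    (h : (Module.finrank ℝ E : Cardinal) ≤ Module.rank ℝ V) : Nonempty (E →ₗᵢ[ℝ] V) := by
  obtain ⟨v, hv⟩ := Module.le_rank_iff.1 h
  have hfinrank : Module.finrank ℝ E = Module.finrank ℝ (Submodule.span ℝ (Set.range v)) := by
    rw [finrank_span_eq_card hv, Fintype.card_fin]
  have := FiniteDimensional.span_of_finite ℝ (Set.finite_range v)
  let e := (stdOrthonormalBasis ℝ E).equiv (stdOrthonormalBasis ℝ (Submodule.span ℝ (Set.range v)))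
    (finCongr hfinrank)
  exact ⟨(Submodule.subtypeₗᵢ _).comp e.toLinearIsometry⟩

variable {ι V : Type*} [Fintype ι] [NormedAddCommGroup V] [InnerProductSpace ℝ V]

variable (ι) in
/-- The all-ones vector of `ℝ^ι`; the standard simplex frame spans its orthogonal complement. -/
noncomputable def onesVector : EuclideanSpace ℝ ι :=
  WithLp.toLp 2 fun _ => 1

lemma inner_onesVector_self : ⟪onesVector ι, onesVector ι⟫ = Fintype.card ι := by
  simp [onesVector, PiLp.inner_apply, -inner_self_eq_norm_sq_to_K]

variable [DecidableEq ι]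

lemma inner_onesVector_single (k : ι) : ⟪onesVector ι, EuclideanSpace.single k (1 : ℝ)⟫ = 1 := by
  simp [onesVector, EuclideanSpace.inner_single_right]

lemma single_sub_onesVector_mem [Nonempty ι] (k : ι) :
    EuclideanSpace.single k (1 : ℝ) - (1 / Fintype.card ι : ℝ) • onesVector ι ∈
      (ℝ ∙ onesVector ι)ᗮ := by
  rw [Submodule.mem_orthogonal_singleton_iff_inner_right, inner_sub_right, real_inner_smul_right,
    inner_onesVector_single, inner_onesVector_self]
  field_simp
  exact sub_self 1

lemma isSimplexETF_single_sub_onesVector [Nonempty ι] :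
    IsSimplexETF 1 fun k : ι =>
      EuclideanSpace.single k (1 : ℝ) - (1 / Fintype.card ι : ℝ) • onesVector ι := by
  intro k j
  rw [inner_sub_left, real_inner_smul_left, Submodule.mem_orthogonal_singleton_iff_inner_right.1
    (single_sub_onesVector_mem j), inner_sub_right, real_inner_smul_right, real_inner_comm,
    real_inner_comm (onesVector ι), inner_onesVector_single, EuclideanSpace.inner_single_left]
  simp [eq_comm, PiLp.single_apply]

theorem exists_isSimplexETF [Nonempty ι]
    (hdim : ((Fintype.card ι - 1 : ℕ) : Cardinal) ≤ Module.rank ℝ V) {a : ℝ} (ha : 0 ≤ a) :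
    ∃ W : ι → V, IsSimplexETF a W := by
  have hones : onesVector ι ≠ 0 := by
    rw [← inner_self_ne_zero (𝕜 := ℝ), inner_onesVector_self]
    exact Nat.cast_ne_zero.2 Fintype.card_ne_zero
  have : Fact (Module.finrank ℝ (EuclideanSpace ℝ ι) = (Fintype.card ι - 1) + 1) :=
    ⟨by rw [finrank_euclideanSpace, Nat.sub_add_cancel Fintype.card_pos]⟩
  obtain ⟨φ⟩ := exists_linearIsometry_of_finrank_le_rank (V := V) (ℝ ∙ onesVector ι)ᗮ
    (by rwa [Submodule.finrank_orthogonal_span_singleton (n := Fintype.card ι - 1) hones])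
  have hU : IsSimplexETF 1 fun k : ι =>
      (⟨_, single_sub_onesVector_mem k⟩ : ((ℝ ∙ onesVector ι)ᗮ : Submodule ℝ _)) :=
    isSimplexETF_single_sub_onesVector
  refine ⟨fun k => √a • φ ⟨_, single_sub_onesVector_mem k⟩, ?_⟩
  simpa only [Real.sq_sqrt ha, mul_one] using (hU.map φ).smul √a

end StandardSimplex

section NeuralCollapse

variable {ι κ V : Type*} [Fintype ι] [NormedAddCommGroup V] [InnerProductSpace ℝ V]

/-- The neural collapse conditions for classes `ι`, samples `κ` in each class and feature
space `V`; the class feature `h̄_k` is represented by the feature of an arbitrary sample. -/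
structure IsNeuralCollapse (W : ι → V) (H : ι → κ → V) : Prop where
  feature_eq : ∀ k i i', H k i = H k i'
  sum_eq_zero : ∑ k, W k = 0
  norm_eq : ∀ k k', ‖W k‖ = ‖W k'‖
  norm_feature_eq : ∀ k k' i i', ‖H k i‖ = ‖H k' i'‖
  feature_ne_zero : ∀ k i, H k i ≠ 0
  inner_feature : ∀ k j, k ≠ j → ∀ i i',
    ⟪H k i, H j i'⟫ = -(‖H k i‖ * ‖H j i'‖) / ((Fintype.card ι : ℝ) - 1)
  self_dual : ∃ C : ℝ, 0 < C ∧ ∀ k i, W k = C • H k i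

lemma IsSimplexETF.isNeuralCollapse [DecidableEq ι] [Nontrivial ι] {W : ι → V}
    {H : ι → κ → V} {a r : ℝ} (hW : IsSimplexETF a W) (ha : a ≠ 0) (hr : 0 < r)
    (hWH : ∀ k i, W k = r • H k i) :
    IsNeuralCollapse W H := by
  have hHW (k : ι) (i : κ) : H k i = r⁻¹ • W k := by rw [hWH k i, inv_smul_smul₀ hr.ne']
  have hH : IsSimplexETF (r⁻¹ ^ 2 * a) fun k => r⁻¹ • W k := hW.smul r⁻¹
  refine ⟨fun k i i' => ?_, hW.sum_eq_zero, hW.norm_eq, fun k k' i i' => ?_, fun k i => ?_,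
    fun k j hkj i i' => ?_, r, hr, hWH⟩
  · rw [hHW, hHW]
  · rw [hHW, hHW]
    exact hH.norm_eq k k'
  · rw [hHW]
    exact hH.ne_zero (by positivity) k
  · rw [hHW, hHW]
    exact hH.inner_eq_neg_norm_mul_norm_div hkj

lemma IsNeuralCollapse.neuralCollapse {K n d : ℕ} {W : Fin K → EuclideanSpace ℝ (Fin d)}
    {H : Fin K → Fin n → EuclideanSpace ℝ (Fin d)} (h : IsNeuralCollapse W H) :
    NeuralCollapse W H :=
  ⟨h.feature_eq, h.sum_eq_zero, h.norm_eq, h.norm_feature_eq, h.feature_ne_zero,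
    by simpa only [Fintype.card_fin] using h.inner_feature, h.self_dual⟩

end NeuralCollapse

section ParameterNorm

variable {ι κ V : Type*} [Fintype ι] [Fintype κ] [NormedAddCommGroup V]

/-- The squared norm `‖W‖_F² + ‖H‖_F²` of the parameters, whose level sets are the spheres on which
the loss is minimized. -/
noncomputable def parameterNormSq (W : ι → V) (H : ι → κ → V) : ℝ :=
  ∑ k, ‖W k‖ ^ 2 + ∑ k, ∑ i, ‖H k i‖ ^ 2

lemma parameterNormSq_pos {W : ι → V} {H : ι → κ → V} (hne : ¬(W = 0 ∧ H = 0)) :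
    0 < parameterNormSq W H := by
  have hnonneg : 0 ≤ parameterNormSq W H := by unfold parameterNormSq; positivity
  refine hnonneg.lt_of_ne' fun h => hne ?_
  obtain ⟨hW, hH⟩ := (add_eq_zero_iff_of_nonneg (by positivity) (by positivity)).1 h
  rw [Fintype.sum_eq_zero_iff_of_nonneg fun k => by positivity] at hW hH
  refine ⟨funext fun k => by simpa using congrFun hW k, funext₂ fun k i => ?_⟩
  have hk := (Fintype.sum_eq_zero_iff_of_nonneg fun i => by positivity).1 (congrFun hH k)
  simpa using congrFun hk i

end ParameterNorm

section LayerPeeled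

variable {ι κ V : Type*} [Fintype ι] [Fintype κ] [NormedAddCommGroup V] [InnerProductSpace ℝ V]

/-- The cross-entropy loss of the layer-peeled model with classes `ι`, samples `κ` in each class and
feature space `V`. -/
noncomputable def layerPeeledLoss [DecidableEq ι] (W : ι → V) (H : ι → κ → V) : ℝ :=
  ∑ k, ∑ i, Real.log (1 + ∑ j with j ≠ k, Real.exp (-⟪W k - W j, H k i⟫))

/-- The barycentre of the classifier vectors. -/
noncomputable def classMean (W : ι → V) : V :=
  (1 / Fintype.card ι : ℝ) • ∑ k, W k

/-- A sum of squares vanishing exactly when `W` is centred and `W k = √n • H k i` for all `k` and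
`i`, where `n` is the number of samples in each class. It measures how far the tangent bound for the
loss is from its optimal value. -/
noncomputable def collapseDefect (W : ι → V) (H : ι → κ → V) : ℝ :=
  ∑ k, ∑ i, ‖W k - classMean W - √(Fintype.card κ) • H k i‖ ^ 2 +
    Fintype.card κ * (Fintype.card ι * ‖classMean W‖ ^ 2)

variable {W : ι → V} {H : ι → κ → V}

section Mean

variable [Nonempty ι]

lemma card_smul_classMean (W : ι → V) : (Fintype.card ι : ℝ) • classMean W = ∑ k, W k := by
  rw [classMean, smul_smul, mul_one_div_cancel (Nat.cast_ne_zero.2 Fintype.card_ne_zero), one_smul]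

lemma sum_inner_sub (W : ι → V) (w h : V) :
    ∑ j, ⟪w - W j, h⟫ = Fintype.card ι * ⟪w - classMean W, h⟫ := by
  rw [← sum_inner, Finset.sum_sub_distrib, Finset.sum_const, Finset.card_univ,
    ← Nat.cast_smul_eq_nsmul ℝ, ← card_smul_classMean, ← smul_sub, real_inner_smul_left]

lemma sum_norm_sub_classMean_sq (W : ι → V) :
    ∑ k, ‖W k - classMean W‖ ^ 2 = ∑ k, ‖W k‖ ^ 2 - Fintype.card ι * ‖classMean W‖ ^ 2 := by
  simp only [norm_sub_sq_real, Finset.sum_add_distrib, Finset.sum_sub_distrib, ← Finset.mul_sum,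
    ← sum_inner, ← card_smul_classMean, real_inner_smul_left, real_inner_self_eq_norm_sq,
    Finset.sum_const, Finset.card_univ, nsmul_eq_mul]
  ring

theorem collapseDefect_eq (W : ι → V) (H : ι → κ → V) :
    collapseDefect W H = Fintype.card κ * parameterNormSq W H -
      2 * √(Fintype.card κ) * ∑ k, ∑ i, ⟪W k - classMean W, H k i⟫ := by
  simp only [collapseDefect, parameterNormSq, norm_sub_sq_real (_ - _), norm_smul, mul_pow,
    real_inner_smul_right, Real.norm_eq_abs, sq_abs, Real.sq_sqrt (Nat.cast_nonneg _),
    Finset.sum_add_distrib, Finset.sum_sub_distrib, ← Finset.mul_sum, Finset.sum_const,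
    Finset.card_univ, nsmul_eq_mul, sum_norm_sub_classMean_sq]
  ring

lemma sum_eq_zero_and_eq_smul_of_collapseDefect_eq_zero [Nonempty κ]
    (h : collapseDefect W H = 0) :
    ∑ k, W k = 0 ∧ ∀ k i, W k = √(Fintype.card κ) • H k i := by
  obtain ⟨hdist, hmean⟩ := (add_eq_zero_iff_of_nonneg (by positivity) (by positivity)).1 h
  have hmean : classMean W = 0 := by simpa using hmean
  refine ⟨by rw [← card_smul_classMean, hmean, smul_zero], fun k i => ?_⟩
  have hk := (Fintype.sum_eq_zero_iff_of_nonneg fun k => by positivity).1 hdist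
  have hki := (Fintype.sum_eq_zero_iff_of_nonneg fun i => by positivity).1 (congrFun hk k)
  simpa [hmean, sub_eq_zero] using congrFun hki i

end Mean

section Bound

variable [Nonempty ι] [Nonempty κ] {c : ℝ}

lemma sum_equalMarginLoss_add_eq
    (hc : parameterNormSq W H = 2 * (Fintype.card ι - 1) * √(Fintype.card κ) * c) :
    ∑ k, ∑ i, (equalMarginLoss ι c +
        wrongClassProb ι c * ((Fintype.card ι - 1) * c - ∑ j, ⟪W k - W j, H k i⟫)) =
      Fintype.card ι * (Fintype.card κ * equalMarginLoss ι c) +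
        wrongClassProb ι c * Fintype.card ι / (2 * √(Fintype.card κ)) * collapseDefect W H := by
  have : (0 : ℝ) < √(Fintype.card κ) := Real.sqrt_pos.2 (Nat.cast_pos.2 Fintype.card_pos)
  simp only [sum_inner_sub, Finset.sum_add_distrib, Finset.sum_sub_distrib, ← Finset.mul_sum,
    Finset.sum_const, Finset.card_univ, nsmul_eq_mul]
  rw [collapseDefect_eq, hc]
  field_simp

variable [DecidableEq ι]

theorem collapseDefect_eq_zero_and_inner_eq_of_layerPeeledLoss_le
    (hc : parameterNormSq W H = 2 * (Fintype.card ι - 1) * √(Fintype.card κ) * c)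
    (hloss : layerPeeledLoss W H ≤ Fintype.card ι * (Fintype.card κ * equalMarginLoss ι c)) :
    collapseDefect W H = 0 ∧ ∀ k i j, j ≠ k → ⟪W k - W j, H k i⟫ = c := by
  have hself (k : ι) (i : κ) : ⟪W k - W k, H k i⟫ = 0 := by rw [sub_self, inner_zero_left]
  have htangent (k : ι) (i : κ) :=
    equalMarginLoss_add_le_log_one_add_sum_exp (s := fun j => ⟪W k - W j, H k i⟫) (hself k i) c
  have hinner (k : ι) := Finset.sum_le_sum fun i (_ : i ∈ univ) => htangent k i
  have hsum := Finset.sum_le_sum fun k (_ : k ∈ univ) => hinner k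
  have hcoeff : 0 < wrongClassProb ι c * Fintype.card ι / (2 * √(Fintype.card κ)) := by
    have := wrongClassProb_pos ι c
    positivity
  have hdefect : 0 ≤ collapseDefect W H := by unfold collapseDefect; positivity
  rw [layerPeeledLoss] at hloss
  have hzero : collapseDefect W H = 0 := by
    rw [sum_equalMarginLoss_add_eq hc] at hsum
    exact (nonpos_of_mul_nonpos_right (by linarith) hcoeff).antisymm hdefect
  refine ⟨hzero, fun k i j hjk => ?_⟩
  have heq := hsum.antisymm (by rw [sum_equalMarginLoss_add_eq hc, hzero]; linarith)
  have hk := (Finset.sum_eq_sum_iff_of_le fun k _ => hinner k).1 heq k (mem_univ k)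
  have hki := (Finset.sum_eq_sum_iff_of_le fun i _ => htangent k i).1 hk i (mem_univ i)
  exact eq_of_log_one_add_sum_exp_le (s := fun j => ⟪W k - W j, H k i⟫) (hself k i) hki.ge hjk

theorem isSimplexETF_and_eq_smul_of_layerPeeledLoss_le
    (hc : parameterNormSq W H = 2 * (Fintype.card ι - 1) * √(Fintype.card κ) * c)
    (hloss : layerPeeledLoss W H ≤ Fintype.card ι * (Fintype.card κ * equalMarginLoss ι c)) :
    IsSimplexETF (√(Fintype.card κ) * c) W ∧ ∀ k i, W k = √(Fintype.card κ) • H k i := by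
  obtain ⟨hdefect, hmargin⟩ := collapseDefect_eq_zero_and_inner_eq_of_layerPeeledLoss_le hc hloss
  obtain ⟨hsum, hWH⟩ := sum_eq_zero_and_eq_smul_of_collapseDefect_eq_zero hdefect
  refine ⟨isSimplexETF_of_inner_sub_self hsum fun k j hjk => ?_, hWH⟩
  obtain ⟨i⟩ := ‹Nonempty κ›
  rw [← hmargin k i j hjk, ← real_inner_smul_right, ← hWH]

end Bound

section Balanced

variable [Nonempty κ]

lemma sum_norm_sq_eq_of_eq_smul (hWH : ∀ k i, W k = √(Fintype.card κ) • H k i) :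
    ∑ k, ‖W k‖ ^ 2 = ∑ k, ∑ i, ‖H k i‖ ^ 2 := by
  refine Finset.sum_congr rfl fun k _ => ?_
  have hn : (Fintype.card κ : ℝ) ≠ 0 := Nat.cast_ne_zero.2 Fintype.card_ne_zero
  have hH (i : κ) : ‖W k‖ ^ 2 = Fintype.card κ * ‖H k i‖ ^ 2 := by
    rw [hWH k i, norm_smul, mul_pow, Real.norm_eq_abs, sq_abs, Real.sq_sqrt (Nat.cast_nonneg _)]
  apply mul_left_cancel₀ hn
  rw [Finset.mul_sum, ← Finset.sum_congr rfl fun i _ => hH i, Finset.sum_const, Finset.card_univ,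
    nsmul_eq_mul]

variable [DecidableEq ι]

lemma IsSimplexETF.parameterNormSq_eq [Nonempty ι] {a : ℝ} (hW : IsSimplexETF a W)
    (hWH : ∀ k i, W k = √(Fintype.card κ) • H k i) :
    parameterNormSq W H = 2 * (Fintype.card ι - 1) * a := by
  rw [parameterNormSq, ← sum_norm_sq_eq_of_eq_smul hWH, hW.sum_norm_sq]
  ring

lemma IsSimplexETF.layerPeeledLoss_eq {c : ℝ} (hW : IsSimplexETF (√(Fintype.card κ) * c) W)
    (hWH : ∀ k i, W k = √(Fintype.card κ) • H k i) :
    layerPeeledLoss W H = Fintype.card ι * (Fintype.card κ * equalMarginLoss ι c) := by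
  have hn : √(Fintype.card κ) ≠ 0 := (Real.sqrt_pos.2 (Nat.cast_pos.2 Fintype.card_pos)).ne'
  have hmargin (k : ι) (i : κ) (j : ι) (hjk : j ≠ k) : ⟪W k - W j, H k i⟫ = c := by
    apply mul_left_cancel₀ hn
    rw [← real_inner_smul_right, ← hWH, hW.inner_sub_self hjk]
  simp only [layerPeeledLoss, log_one_add_sum_exp_of_eq (hmargin _ _), Finset.sum_const,
    Finset.card_univ, nsmul_eq_mul]

end Balanced

theorem optimal_on_sphere_is_neural_collapse_general [DecidableEq ι] [Nontrivial ι] [Nonempty κ]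
    (hdim : ((Fintype.card ι - 1 : ℕ) : Cardinal) ≤ Module.rank ℝ V) (hne : ¬(W = 0 ∧ H = 0))
    (hopt : ∀ (W' : ι → V) (H' : ι → κ → V),
      parameterNormSq W' H' = parameterNormSq W H → layerPeeledLoss W H ≤ layerPeeledLoss W' H') :
    IsNeuralCollapse W H ∧ (∀ k i, W k = √(Fintype.card κ) • H k i) ∧
      √(∑ k, ‖W k‖ ^ 2) = √(∑ k, ∑ i, ‖H k i‖ ^ 2) := by
  have hK : (0 : ℝ) < Fintype.card ι - 1 :=
    sub_pos.2 (by exact_mod_cast Fintype.one_lt_card (α := ι))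
  have hn : 0 < √(Fintype.card κ) := Real.sqrt_pos.2 (Nat.cast_pos.2 Fintype.card_pos)
  have hpos := parameterNormSq_pos hne
  obtain ⟨c, hc⟩ : ∃ c, parameterNormSq W H = 2 * (Fintype.card ι - 1) * √(Fintype.card κ) * c :=
    ⟨_, (mul_div_cancel₀ _ (by positivity)).symm⟩
  have hcpos : 0 < c := pos_of_mul_pos_right (hc ▸ hpos) (by positivity)
  obtain ⟨M, hM⟩ := exists_isSimplexETF hdim (a := √(Fintype.card κ) * c) (by positivity)
  have hMH (k : ι) (_ : κ) : M k = √(Fintype.card κ) • (√(Fintype.card κ))⁻¹ • M k :=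
    (smul_inv_smul₀ hn.ne' _).symm
  have hloss := hopt M _ (by rw [hM.parameterNormSq_eq hMH, hc, mul_assoc _ (√_)])
  rw [hM.layerPeeledLoss_eq hMH] at hloss
  obtain ⟨hW, hWH⟩ := isSimplexETF_and_eq_smul_of_layerPeeledLoss_le hc hloss
  exact ⟨hW.isNeuralCollapse (by positivity) hn hWH, hWH,
    congrArg Real.sqrt (sum_norm_sq_eq_of_eq_smul hWH)⟩

end LayerPeeled

theorem optimal_on_sphere_is_neural_collapse {K n d : ℕ}
    (hK : 2 ≤ K) (hn : 1 ≤ n) (hd : K - 1 ≤ d)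
    (W : Fin K → EuclideanSpace ℝ (Fin d)) (H : Fin K → Fin n → EuclideanSpace ℝ (Fin d))
    (hne : ¬(W = 0 ∧ H = 0))
    (hopt : ∀ (W' : Fin K → EuclideanSpace ℝ (Fin d))
        (H' : Fin K → Fin n → EuclideanSpace ℝ (Fin d)),
        WF2 W' + HF2 H' = WF2 W + HF2 H → LWH W H ≤ LWH W' H') :
    NeuralCollapse W H ∧ (∀ k i, W k = Real.sqrt n • H k i) ∧
      Real.sqrt (WF2 W) = Real.sqrt (HF2 H) := by
  have := Fin.nontrivial_iff_two_le.2 hK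
  have := Fin.pos_iff_nonempty.1 hn
  obtain ⟨hNC, hWH, hnorm⟩ := optimal_on_sphere_is_neural_collapse_general
    (by simpa [← Module.finrank_eq_rank] using hd) hne hopt
  exact ⟨hNC.neuralCollapse, by simpa only [Fintype.card_fin] using hWH, hnorm⟩
end

section
/- For every classifier W and feature matrix H, the cross-entropy loss satisfies L(W,H) ≥ nK · log(1 + (K−1)·exp(−(‖W‖_F² + ‖H‖_F²)/(2√n(K−1)))). -/
open scoped BigOperators RealInnerProductSpace
open Finset

/-!
The loss is a function of the scores `⟪W k - W j, H k i⟫` alone. By Jensen's inequality for `exp`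
within each sample, and for `t ↦ log (1 + (K - 1) * exp t)` across samples, replacing every score
by the overall average does not increase it, and it decreases as that average grows. The scores of
a sample sum to `K * ⟪W k - mean W, H k i⟫`; Young's inequality with weight `√n`, together with
`∑ ‖W k - mean W‖² ≤ ∑ ‖W k‖²`, bounds their average by `(‖W‖² + ‖H‖²) / (2 * √n * (K - 1))`.
-/

section Jensen

theorem card_mul_map_le_sum_of_convexOn_of_monotone {𝕜 ι : Type*} [Field 𝕜] [LinearOrder 𝕜]
    [IsStrictOrderedRing 𝕜] {s : Finset ι} {f : 𝕜 → 𝕜} {x : ι → 𝕜} {a : 𝕜}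
    (hconv : ConvexOn 𝕜 Set.univ f) (hmono : Monotone f) (ha : #s * a ≤ ∑ i ∈ s, x i) :
    #s * f a ≤ ∑ i ∈ s, f (x i) := by
  obtain rfl | hs := s.eq_empty_or_nonempty
  · simp
  have hcard : (0 : 𝕜) < #s := by exact_mod_cast hs.card_pos
  have jensen : f (∑ i ∈ s, (#s : 𝕜)⁻¹ * x i) ≤ ∑ i ∈ s, (#s : 𝕜)⁻¹ * f (x i) :=
    hconv.map_sum_le (fun _ _ => by positivity) (by simp [hcard.ne']) fun _ _ => Set.mem_univ _
  rw [← mul_sum, ← mul_sum] at jensen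
  have ha' : a ≤ (#s : 𝕜)⁻¹ * ∑ i ∈ s, x i := (le_inv_mul_iff₀ hcard).mpr ha
  exact (le_inv_mul_iff₀ hcard).mp ((hmono ha').trans jensen)

theorem monotone_log_one_add_mul_exp {c : ℝ} (hc : 0 ≤ c) :
    Monotone fun t => Real.log (1 + c * Real.exp t) := by
  intro t u htu
  dsimp only
  gcongr

theorem convexOn_log_one_add_mul_exp {c : ℝ} (hc : 0 ≤ c) :
    ConvexOn ℝ Set.univ fun t => Real.log (1 + c * Real.exp t) := by
  have hpos (t : ℝ) : 0 < 1 + c * Real.exp t := by positivity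
  have hderiv (t : ℝ) : HasDerivAt (fun t => Real.log (1 + c * Real.exp t))
      (c * Real.exp t / (1 + c * Real.exp t)) t :=
    (((Real.hasDerivAt_exp t).const_mul c).const_add 1).log (hpos t).ne'
  refine Monotone.convexOn_univ_of_deriv (fun t => (hderiv t).differentiableAt) ?_
  rw [funext fun t => (hderiv t).deriv]
  intro t u htu
  rw [div_le_div_iff₀ (hpos t) (hpos u)]
  have : c * Real.exp t ≤ c * Real.exp u := by gcongr
  linarith

theorem card_mul_log_one_add_mul_exp_neg_le {τ ι : Type*} {T : Finset τ} {A : τ → Finset ι}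
    {s : τ → ι → ℝ} {m q : ℝ} (hm : 0 < m) (hA : ∀ t ∈ T, #(A t) = m)
    (hq : ∑ t ∈ T, ∑ j ∈ A t, s t j ≤ #T * (m * q)) :
    #T * Real.log (1 + m * Real.exp (-q)) ≤
      ∑ t ∈ T, Real.log (1 + ∑ j ∈ A t, Real.exp (-s t j)) := by
  have hmean : #T * -q ≤ ∑ t ∈ T, -((∑ j ∈ A t, s t j) / m) := by
    rw [sum_neg_distrib, ← sum_div, mul_neg, neg_le_neg_iff, div_le_iff₀ hm]
    linarith
  have hexp : ∀ t ∈ T, m * Real.exp (-((∑ j ∈ A t, s t j) / m)) ≤ ∑ j ∈ A t, Real.exp (-s t j) := by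
    intro t ht
    rw [← hA t ht]
    refine card_mul_map_le_sum_of_convexOn_of_monotone convexOn_exp Real.exp_monotone (le_of_eq ?_)
    rw [sum_neg_distrib, mul_neg, mul_div_cancel₀ _ (by rw [hA t ht]; exact hm.ne')]
  calc #T * Real.log (1 + m * Real.exp (-q))
      ≤ ∑ t ∈ T, Real.log (1 + m * Real.exp (-((∑ j ∈ A t, s t j) / m))) :=
        card_mul_map_le_sum_of_convexOn_of_monotone (f := fun t => Real.log (1 + m * Real.exp t))
          (convexOn_log_one_add_mul_exp hm.le) (monotone_log_one_add_mul_exp hm.le) hmean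
    _ ≤ ∑ t ∈ T, Real.log (1 + ∑ j ∈ A t, Real.exp (-s t j)) := by
        gcongr with t ht
        exact hexp t ht

end Jensen

section InnerProductSpace

variable {ι κ E : Type*} [Fintype ι] [Fintype κ] [SeminormedAddCommGroup E] [InnerProductSpace ℝ E]

theorem real_inner_le_norm_sq_div_add_mul_norm_sq {r : ℝ} (hr : 0 < r) (x y : E) :
    ⟪x, y⟫ ≤ (‖x‖ ^ 2 / r + r * ‖y‖ ^ 2) / 2 := by
  have hsq : 0 ≤ ‖x - r • y‖ ^ 2 / r := by positivity
  rw [norm_sub_sq_real, real_inner_smul_right, norm_smul, Real.norm_of_nonneg hr.le] at hsq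
  field_simp at hsq ⊢
  linarith

theorem sum_real_inner_le_sqrt_card_mul (x : E) (y : κ → E) :
    ∑ i, ⟪x, y i⟫ ≤ √(Fintype.card κ) / 2 * (‖x‖ ^ 2 + ∑ i, ‖y i‖ ^ 2) := by
  obtain _ | _ := isEmpty_or_nonempty κ
  · simp
  set r := √(Fintype.card κ : ℝ)
  have hr : 0 < r := Real.sqrt_pos.mpr (by exact_mod_cast Fintype.card_pos)
  calc ∑ i, ⟪x, y i⟫
      ≤ ∑ i, (‖x‖ ^ 2 / r + r * ‖y i‖ ^ 2) / 2 :=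
        sum_le_sum fun i _ => real_inner_le_norm_sq_div_add_mul_norm_sq hr x (y i)
    _ = (r ^ 2 * (‖x‖ ^ 2 / r) + r * ∑ i, ‖y i‖ ^ 2) / 2 := by
        rw [← sum_div, sum_add_distrib, sum_const, card_univ, nsmul_eq_mul, ← mul_sum,
          Real.sq_sqrt (Nat.cast_nonneg _)]
    _ = r / 2 * (‖x‖ ^ 2 + ∑ i, ‖y i‖ ^ 2) := by field_simp

theorem sum_norm_sub_mean_sq_le (w : ι → E) :
    ∑ k, ‖w k - (Fintype.card ι : ℝ)⁻¹ • ∑ j, w j‖ ^ 2 ≤ ∑ k, ‖w k‖ ^ 2 := by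
  obtain _ | _ := isEmpty_or_nonempty ι
  · simp
  have hcard : (Fintype.card ι : ℝ) ≠ 0 := by exact_mod_cast Fintype.card_ne_zero
  set μ := (Fintype.card ι : ℝ)⁻¹ • ∑ j, w j with hμ
  have hsum : ∑ j, w j = (Fintype.card ι : ℝ) • μ := by rw [hμ, smul_inv_smul₀ hcard]
  calc ∑ k, ‖w k - μ‖ ^ 2
      = ∑ k, ‖w k‖ ^ 2 - 2 * ⟪∑ k, w k, μ⟫ + Fintype.card ι * ‖μ‖ ^ 2 := by
        simp only [norm_sub_sq_real, sum_add_distrib, sum_sub_distrib, ← mul_sum, ← sum_inner,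
          sum_const, card_univ, nsmul_eq_mul]
    _ = ∑ k, ‖w k‖ ^ 2 - Fintype.card ι * ‖μ‖ ^ 2 := by
        rw [hsum, real_inner_smul_left, real_inner_self_eq_norm_sq]
        ring
    _ ≤ ∑ k, ‖w k‖ ^ 2 := sub_le_self _ (by positivity)

theorem sum_inner_sub_eq_card_mul_inner_sub_mean (w : ι → E) (k : ι) (h : E) :
    ∑ j, ⟪w k - w j, h⟫ =
      Fintype.card ι * ⟪w k - (Fintype.card ι : ℝ)⁻¹ • ∑ j, w j, h⟫ := by
  have : Nonempty ι := ⟨k⟩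
  have hcard : (Fintype.card ι : ℝ) ≠ 0 := by exact_mod_cast Fintype.card_ne_zero
  rw [← sum_inner, sum_sub_distrib, sum_const, card_univ, ← Nat.cast_smul_eq_nsmul ℝ,
    ← real_inner_smul_left, smul_sub, smul_inv_smul₀ hcard]

theorem sum_filter_ne_inner_sub [DecidableEq ι] (w : ι → E) (k : ι) (h : E) :
    ∑ j with j ≠ k, ⟪w k - w j, h⟫ = ∑ j, ⟪w k - w j, h⟫ :=
  sum_filter_of_ne fun j _ hj hjk => hj (by rw [hjk, sub_self, inner_zero_left])

theorem sum_inner_sub_le_card_mul_sqrt_card_mul (W : ι → E) (H : ι → κ → E) :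
    ∑ k, ∑ i, ∑ j, ⟪W k - W j, H k i⟫ ≤
      Fintype.card ι * (√(Fintype.card κ) / 2) * (∑ k, ‖W k‖ ^ 2 + ∑ k, ∑ i, ‖H k i‖ ^ 2) := by
  simp only [sum_inner_sub_eq_card_mul_inner_sub_mean, ← mul_sum, mul_assoc]
  gcongr
  calc ∑ k, ∑ i, ⟪W k - (Fintype.card ι : ℝ)⁻¹ • ∑ j, W j, H k i⟫
      ≤ ∑ k, √(Fintype.card κ) / 2 *
          (‖W k - (Fintype.card ι : ℝ)⁻¹ • ∑ j, W j‖ ^ 2 + ∑ i, ‖H k i‖ ^ 2) :=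
        sum_le_sum fun k _ => sum_real_inner_le_sqrt_card_mul _ _
    _ ≤ √(Fintype.card κ) / 2 * (∑ k, ‖W k‖ ^ 2 + ∑ k, ∑ i, ‖H k i‖ ^ 2) := by
        rw [← mul_sum, sum_add_distrib]
        gcongr ?_ * (?_ + _)
        exact sum_norm_sub_mean_sq_le W

theorem loss_lower_bound_general [DecidableEq ι] [Nontrivial ι] [Nonempty κ]
    (W : ι → E) (H : ι → κ → E) :
    (Fintype.card κ : ℝ) * Fintype.card ι *
        Real.log (1 + ((Fintype.card ι : ℝ) - 1) *
          Real.exp (-((∑ k, ‖W k‖ ^ 2 + ∑ k, ∑ i, ‖H k i‖ ^ 2) /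
            (2 * √(Fintype.card κ) * ((Fintype.card ι : ℝ) - 1)))))
      ≤ ∑ k, ∑ i, Real.log (1 + ∑ j with j ≠ k, Real.exp (-⟪W k - W j, H k i⟫)) := by
  have hclasses : (0 : ℝ) < Fintype.card ι - 1 :=
    sub_pos.mpr (by exact_mod_cast Fintype.one_lt_card)
  have hothers (k : ι) : (#{j | j ≠ k} : ℝ) = Fintype.card ι - 1 := by
    rw [filter_ne', cast_card_erase_of_mem (mem_univ k), card_univ]
  have hsamples : (#(univ : Finset (ι × κ)) : ℝ) = Fintype.card κ * Fintype.card ι := by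
    rw [card_univ, Fintype.card_prod, Nat.cast_mul, mul_comm]
  set B := ∑ k, ‖W k‖ ^ 2 + ∑ k, ∑ i, ‖H k i‖ ^ 2
  set q := B / (2 * √(Fintype.card κ) * ((Fintype.card ι : ℝ) - 1)) with hq
  have hbound : Fintype.card ι * (√(Fintype.card κ) / 2) * B =
      Fintype.card κ * Fintype.card ι * ((Fintype.card ι - 1) * q) := by
    rw [hq]
    have hsqrt : √(Fintype.card κ) ^ 2 = Fintype.card κ := Real.sq_sqrt (Nat.cast_nonneg _)
    field_simp
    rw [hsqrt, mul_comm]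
  have hscores : ∑ t : ι × κ, ∑ j with j ≠ t.1, ⟪W t.1 - W j, H t.1 t.2⟫ ≤
      #(univ : Finset (ι × κ)) * ((Fintype.card ι - 1) * q) := by
    rw [hsamples, Fintype.sum_prod_type, ← hbound]
    simp only [sum_filter_ne_inner_sub]
    exact sum_inner_sub_le_card_mul_sqrt_card_mul W H
  simpa only [hsamples, Fintype.sum_prod_type] using
    card_mul_log_one_add_mul_exp_neg_le hclasses (fun t _ => hothers t.1) hscores

end InnerProductSpace

theorem loss_lower_bound {K n d : ℕ} (hK : 2 ≤ K) (hn : 1 ≤ n) (hd : 1 ≤ d)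
    (W : Fin K → EuclideanSpace ℝ (Fin d)) (H : Fin K → Fin n → EuclideanSpace ℝ (Fin d)) :
    (n : ℝ) * (K : ℝ) *
        Real.log (1 + ((K : ℝ) - 1) *
          Real.exp (-((WF2 W + HF2 H) / (2 * Real.sqrt n * ((K : ℝ) - 1)))))
      ≤ LWH W H := by
  have : Nontrivial (Fin K) := Fin.nontrivial_iff_two_le.mpr hK
  have : Nonempty (Fin n) := ⟨⟨0, hn⟩⟩
  simpa only [Fintype.card_fin, WF2, HF2, LWH, sWH] using loss_lower_bound_general W H
end

section
/- Assume d ≥ K−1, (W,H) ≠ (0,0), and (W,H) does NOT satisfy the neural collapse conditions with ‖W‖_F = ‖H‖_F. Then for every ε > 0 there exists (W',H') such that ‖W'‖_F² + ‖H'‖_F² = ‖W‖_F² + ‖H‖_F², ‖W'−W‖_F² + ‖H'−H‖_F² < ε, and L(W',H') < L(W,H). -/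
open scoped BigOperators RealInnerProductSpace
open Finset

/-!
The loss is a convex function `f` of the logits, and the logits are a quadratic map `Q` of the
parameters. If `x` is a local minimum of `f ∘ Q` on its sphere, the first-order condition makes `x`
an eigenvector of the quadratic form `f' ∘ Q`, where `f'` is the derivative of `f` at `Q x`, with
the Lagrange multiplier `μ` as eigenvalue. The second-order condition along directions that do not
change the logits to first order, together with `K - 1 ≤ d`, makes `μ` the bottom eigenvalue when
`μ ≠ 0`; convexity then gives `f (Q x') ≥ f (Q x) + f' (Q x' - Q x) ≥ f (Q x)` on the whole sphere.

The function `f` is strictly convex up to adding a constant to the logits of a sample, so all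
parameters of the same norm and loss as `x` have the same logits. Hence the logits of `x` are
invariant under permuting the classes and the samples within each class, and the first-order
condition turns this symmetry into neural collapse.

If `μ = 0`, a maximum principle for the softmax averages forces all classifiers to coincide. Then
the loss does not depend on the features, so `x` lies in a valley of local minima, and the
first-order condition cannot hold along the whole valley.
-/

namespace LayerPeeled

open Filter Topology Metric
open QuadraticMap (polar)

section SphereCriticality

variable {E F : Type*} [NormedAddCommGroup E] [InnerProductSpace ℝ E]
  [NormedAddCommGroup F] [NormedSpace ℝ F]

/-- First- and second-order necessary conditions for `x` to be a local minimum of `f ∘ Q` on the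
sphere through `x`, where `g` stands for the derivative of `f` at `Q x` and `μ` for the Lagrange
multiplier. `polar_eq` says that `x` is an eigenvector, with eigenvalue `μ`, of the quadratic form
`g ∘ Q`; the second-order condition is recorded only along directions annihilated by
`polar Q x`, where the second derivative of `f` does not enter. -/
structure IsSphereCritical (Q : QuadraticMap ℝ E F) (g : F →L[ℝ] ℝ) (μ : ℝ) (x : E) : Prop where
  polar_eq : ∀ v, g (polar Q x v) = 2 * μ * ⟪x, v⟫
  mul_norm_sq_le : ∀ v, polar Q x v = 0 → ⟪x, v⟫ = 0 → μ * ‖v‖ ^ 2 ≤ g (Q v)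

lemma IsSphereCritical.apply_self {Q : QuadraticMap ℝ E F} {g : F →L[ℝ] ℝ} {μ : ℝ} {x : E}
    (h : IsSphereCritical Q g μ x) : g (Q x) = μ * ‖x‖ ^ 2 := by
  have hx := h.polar_eq x
  rw [QuadraticMap.polar_self, map_nsmul, real_inner_self_eq_norm_sq, nsmul_eq_mul] at hx
  push_cast at hx
  linarith

lemma tendsto_radial_projection {x : E} (hx : x ≠ 0) (v : E) :
    Tendsto (fun t : ℝ ↦ (‖x‖ / ‖x + t • v‖) • (x + t • v)) (𝓝 0) (𝓝[sphere 0 ‖x‖] x) := by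
  have hline : Tendsto (fun t : ℝ ↦ x + t • v) (𝓝 0) (𝓝 x) :=
    Continuous.tendsto' (by fun_prop) 0 x (by simp)
  refine tendsto_nhdsWithin_iff.2 ⟨?_, ?_⟩
  · have hscale := (tendsto_const_nhds (x := ‖x‖)).div hline.norm (norm_ne_zero_iff.2 hx)
    simpa [div_self (norm_ne_zero_iff.2 hx)] using hscale.smul hline
  · filter_upwards [hline.eventually_ne hx] with t ht
    rw [mem_sphere_zero_iff_norm, norm_smul, norm_div, norm_norm, norm_norm,
      div_mul_cancel₀ _ (norm_ne_zero_iff.2 ht)]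

lemma quadraticMap_add_smul (Q : QuadraticMap ℝ E F) (x v : E) (t : ℝ) :
    Q (x + t • v) = Q x + t • polar Q x v + t ^ 2 • Q v := by
  rw [QuadraticMap.map_add Q, QuadraticMap.polar_smul_right, QuadraticMap.map_smul, ← sq]
  abel

lemma eventually_le_of_isLocalMinOn_sphere {f : F → ℝ} {Q : QuadraticMap ℝ E F} {x : E}
    (hx : x ≠ 0) (hmin : IsLocalMinOn (fun y ↦ f (Q y)) (sphere 0 ‖x‖) x) (v : E) :
    ∀ᶠ t : ℝ in 𝓝 0, f (Q x) ≤ f ((‖x‖ ^ 2 / ‖x + t • v‖ ^ 2) • Q (x + t • v)) := by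
  filter_upwards [(tendsto_radial_projection hx v).eventually hmin] with t ht
  rwa [QuadraticMap.map_smul, ← sq, div_pow] at ht

lemma hasDerivAt_div_smul {N : ℝ → ℝ} {c : ℝ → F} {N' t : ℝ} {c' : F} (hN : HasDerivAt N N' t)
    (hc : HasDerivAt c c' t) (ht : N t ≠ 0) :
    HasDerivAt (fun s ↦ (N t / N s) • c s) (c' - (N' / N t) • c t) t := by
  refine (((hasDerivAt_const t (N t)).fun_div hN ht).fun_smul hc).congr_deriv ?_
  rw [div_self ht, one_smul, zero_mul, zero_sub, sq, neg_div, mul_div_mul_left _ _ ht, neg_smul,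
    sub_eq_add_neg]

lemma fderiv_polar_of_isLocalMinOn_sphere {f : F → ℝ} {Q : QuadraticMap ℝ E F} {x : E}
    (hx : x ≠ 0) (hf : DifferentiableAt ℝ f (Q x))
    (hmin : IsLocalMinOn (fun y ↦ f (Q y)) (sphere 0 ‖x‖) x) (v : E) :
    fderiv ℝ f (Q x) (polar Q x v) = 2 * (fderiv ℝ f (Q x) (Q x) / ‖x‖ ^ 2) * ⟪x, v⟫ := by
  have hline : HasDerivAt (fun t : ℝ ↦ x + t • v) v 0 := by
    simpa using ((hasDerivAt_id (0 : ℝ)).smul_const v).const_add x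
  have hQ : HasDerivAt (fun t : ℝ ↦ Q (x + t • v)) (polar Q x v) 0 := by
    simp only [quadraticMap_add_smul]
    simpa using (((hasDerivAt_id (0 : ℝ)).smul_const (polar Q x v)).const_add (Q x)).fun_add
      (((hasDerivAt_id (0 : ℝ)).pow 2).smul_const (Q v))
  have hcurve := hasDerivAt_div_smul hline.norm_sq hQ (by simpa using hx)
  have hmin' : IsLocalMin (fun t : ℝ ↦ f ((‖x + (0 : ℝ) • v‖ ^ 2 / ‖x + t • v‖ ^ 2) •
      Q (x + t • v))) 0 := by
    filter_upwards [eventually_le_of_isLocalMinOn_sphere hx hmin v] with t ht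
    simpa [hx] using ht
  have hzero := hmin'.hasDerivAt_eq_zero
    (HasFDerivAt.comp_hasDerivAt 0 (by simpa [hx] using hf.hasFDerivAt) hcurve)
  simp only [zero_smul, add_zero, map_sub, map_smul, smul_eq_mul] at hzero
  linear_combination hzero

lemma mul_norm_sq_le_of_isLocalMinOn_sphere {f : F → ℝ} {Q : QuadraticMap ℝ E F} {x : E}
    (hx : x ≠ 0) (hf : DifferentiableAt ℝ f (Q x))
    (hmin : IsLocalMinOn (fun y ↦ f (Q y)) (sphere 0 ‖x‖) x) {v : E}
    (hpolar : polar Q x v = 0) (hinner : ⟪x, v⟫ = 0) :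
    fderiv ℝ f (Q x) (Q x) / ‖x‖ ^ 2 * ‖v‖ ^ 2 ≤ fderiv ℝ f (Q x) (Q v) := by
  have hN : ‖x‖ ^ 2 ≠ 0 := by simpa using hx
  -- Along `v` the curve on the sphere depends on `s = t ^ 2` only, and is differentiable in `s`.
  let curve (s : ℝ) : F := (‖x‖ ^ 2 / (‖x‖ ^ 2 + s * ‖v‖ ^ 2)) • (Q x + s • Q v)
  have hcurve : HasDerivAt curve (Q v - (‖v‖ ^ 2 / ‖x‖ ^ 2) • Q x) 0 := by
    simpa [curve, smul_add] using hasDerivAt_div_smul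
      (((hasDerivAt_id (0 : ℝ)).mul_const (‖v‖ ^ 2)).const_add (‖x‖ ^ 2))
      (((hasDerivAt_id (0 : ℝ)).smul_const (Q v)).const_add (Q x)) (by simpa using hx)
  have hcurve_zero : curve 0 = Q x := by simp [curve, hN]
  have hmin' : IsLocalMinOn (fun s ↦ f (curve s)) (Set.Ici 0) 0 := by
    have hsqrt : Tendsto Real.sqrt (𝓝[≥] 0) (𝓝 0) :=
      (Real.continuous_sqrt.tendsto' 0 0 Real.sqrt_zero).mono_left nhdsWithin_le_nhds
    filter_upwards [hsqrt.eventually (eventually_le_of_isLocalMinOn_sphere hx hmin v),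
      self_mem_nhdsWithin] with s hs hs0
    have hnorm : ‖x + √s • v‖ ^ 2 = ‖x‖ ^ 2 + s * ‖v‖ ^ 2 := by
      rw [norm_add_sq_real, inner_smul_right, hinner, norm_smul, mul_pow, Real.norm_eq_abs,
        sq_abs, Real.sq_sqrt hs0]
      ring
    rw [hnorm, quadraticMap_add_smul, hpolar, smul_zero, add_zero, Real.sq_sqrt hs0] at hs
    rwa [hcurve_zero]
  have hderiv : HasDerivAt (fun s ↦ f (curve s)) _ 0 :=
    HasFDerivAt.comp_hasDerivAt 0 (by simpa [hcurve_zero] using hf.hasFDerivAt) hcurve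
  have hcone : (1 : ℝ) ∈ posTangentConeAt (Set.Ici 0) 0 :=
    mem_posTangentConeAt_of_segment_subset (by
      rw [zero_add, segment_eq_Icc zero_le_one]; exact Set.Icc_subset_Ici_self)
  have hnonneg := hmin'.hasFDerivWithinAt_nonneg hderiv.hasFDerivAt.hasFDerivWithinAt hcone
  simp only [ContinuousLinearMap.toSpanSingleton_apply, map_sub, map_smul,
    smul_eq_mul] at hnonneg
  linear_combination hnonneg

lemma isSphereCritical_of_isLocalMinOn {f : F → ℝ} {Q : QuadraticMap ℝ E F} {x : E}
    (hx : x ≠ 0) (hf : DifferentiableAt ℝ f (Q x))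
    (hmin : IsLocalMinOn (fun y ↦ f (Q y)) (sphere 0 ‖x‖) x) :
    IsSphereCritical Q (fderiv ℝ f (Q x)) (fderiv ℝ f (Q x) (Q x) / ‖x‖ ^ 2) x :=
  ⟨fderiv_polar_of_isLocalMinOn_sphere hx hf hmin,
    fun _ ↦ mul_norm_sq_le_of_isLocalMinOn_sphere hx hf hmin⟩

end SphereCriticality

section CrossEntropy

variable {κ σ : Type*} [Fintype κ] [Fintype σ]

/-- The log-sum-exp function `log ∑ j, exp (z j)`, the log-partition part of the cross entropy. -/
noncomputable def logSumExp (z : κ → ℝ) : ℝ := Real.log (∑ j, Real.exp (z j))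

/-- The softmax probabilities of a logit vector; they form the gradient of `logSumExp`. -/
noncomputable def softmax (z : κ → ℝ) (j : κ) : ℝ := Real.exp (z j) / ∑ i, Real.exp (z i)

/-- The total cross-entropy loss of the logits `Z s j` of samples `s : σ` with labels `y s : κ`. -/
noncomputable def crossEntropy (y : σ → κ) (Z : σ → κ → ℝ) : ℝ :=
  ∑ s, (logSumExp (Z s) - Z s (y s))

lemma softmax_const (c : ℝ) (j : κ) : softmax (fun _ ↦ c) j = (Fintype.card κ : ℝ)⁻¹ := by
  rw [softmax, sum_const, card_univ, nsmul_eq_mul, div_mul_cancel_right₀ (Real.exp_ne_zero c)]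

variable [Nonempty κ]

lemma sum_exp_pos (z : κ → ℝ) : 0 < ∑ j, Real.exp (z j) :=
  sum_pos (fun _ _ ↦ Real.exp_pos _) univ_nonempty

lemma softmax_pos (z : κ → ℝ) (j : κ) : 0 < softmax z j :=
  div_pos (Real.exp_pos _) (sum_exp_pos z)

lemma sum_softmax (z : κ → ℝ) : ∑ j, softmax z j = 1 := by
  simp only [softmax, ← sum_div]
  exact div_self (sum_exp_pos z).ne'

lemma logSumExp_const (c : ℝ) :
    logSumExp (fun _ : κ ↦ c) = Real.log (Fintype.card κ) + c := by
  rw [logSumExp, sum_const, card_univ, nsmul_eq_mul,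
    Real.log_mul (Nat.cast_ne_zero.2 Fintype.card_ne_zero) (Real.exp_ne_zero c), Real.log_exp]

lemma logSumExp_sub_apply [DecidableEq κ] (z : κ → ℝ) (k : κ) :
    logSumExp z - z k = Real.log (1 + ∑ j with j ≠ k, Real.exp (-(z k - z j))) := by
  conv_lhs => rw [logSumExp, ← Real.log_exp (z k),
    ← Real.log_div (sum_exp_pos z).ne' (Real.exp_ne_zero _), sum_div]
  simp only [neg_sub, Real.exp_sub, filter_ne']
  rw [← add_sum_erase _ _ (mem_univ k), div_self (Real.exp_ne_zero _)]

lemma hasFDerivAt_logSumExp (z : κ → ℝ) :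
    HasFDerivAt logSumExp (∑ j, softmax z j • ContinuousLinearMap.proj (R := ℝ) (φ := fun _ ↦ ℝ) j)
      z := by
  refine ((HasFDerivAt.fun_sum fun j _ ↦ (hasFDerivAt_apply j z).exp).log
    (sum_exp_pos z).ne').congr_fderiv ?_
  simp only [softmax, smul_sum, smul_smul, div_eq_inv_mul]

lemma logSumExp_sub (z z' : κ → ℝ) :
    logSumExp z' - logSumExp z = Real.log (∑ j, softmax z j * Real.exp (z' j - z j)) := by
  rw [logSumExp, logSumExp, ← Real.log_div (sum_exp_pos z').ne' (sum_exp_pos z).ne', sum_div]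
  congr! 2 with j
  rw [softmax, Real.exp_sub, div_mul_div_comm, mul_comm, mul_div_mul_right _ _ (Real.exp_ne_zero _)]

lemma logSumExp_add_le (z z' : κ → ℝ) :
    logSumExp z + ∑ j, softmax z j * (z' j - z j) ≤ logSumExp z' := by
  have hjensen := convexOn_exp.map_sum_le (t := univ) (p := fun j ↦ z' j - z j)
    (fun j _ ↦ (softmax_pos z j).le) (sum_softmax z) (fun _ _ ↦ Set.mem_univ _)
  simp only [smul_eq_mul] at hjensen
  rw [← le_sub_iff_add_le', logSumExp_sub]
  exact (Real.le_log_iff_exp_le ((Real.exp_pos _).trans_le hjensen)).2 hjensen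

lemma logSumExp_add_lt {z z' : κ → ℝ} (h : ∃ i j, z' i - z i ≠ z' j - z j) :
    logSumExp z + ∑ j, softmax z j * (z' j - z j) < logSumExp z' := by
  obtain ⟨i, j, hij⟩ := h
  have hjensen := strictConvexOn_exp.map_sum_lt (t := univ) (p := fun j ↦ z' j - z j)
    (fun j _ ↦ softmax_pos z j) (sum_softmax z) (fun _ _ ↦ Set.mem_univ _)
    ⟨i, mem_univ i, j, mem_univ j, hij⟩
  simp only [smul_eq_mul] at hjensen
  rw [← lt_sub_iff_add_lt', logSumExp_sub]
  exact (Real.lt_log_iff_exp_lt ((Real.exp_pos _).trans hjensen)).2 hjensen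

variable (y : σ → κ)

lemma hasFDerivAt_crossEntropy (Z : σ → κ → ℝ) :
    HasFDerivAt (crossEntropy y)
      (∑ s, ((∑ j, softmax (Z s) j • ContinuousLinearMap.proj (R := ℝ) (φ := fun _ ↦ ℝ) j) -
        ContinuousLinearMap.proj (y s)).comp (ContinuousLinearMap.proj s)) Z := by
  refine HasFDerivAt.fun_sum fun s _ ↦ ?_
  have hterm := (hasFDerivAt_logSumExp (Z s)).fun_sub (hasFDerivAt_apply (𝕜 := ℝ) (y s) (Z s))
  exact HasFDerivAt.comp (f := fun Z ↦ Z s) Z hterm (hasFDerivAt_apply s Z)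

lemma differentiable_crossEntropy : Differentiable ℝ (crossEntropy y) := fun Z ↦
  (hasFDerivAt_crossEntropy y Z).differentiableAt

lemma fderiv_crossEntropy_apply (Z D : σ → κ → ℝ) :
    fderiv ℝ (crossEntropy y) Z D = ∑ s, (∑ j, softmax (Z s) j * D s j - D s (y s)) := by
  simp [(hasFDerivAt_crossEntropy y Z).fderiv]

lemma fderiv_crossEntropy_apply_const (Z : σ → κ → ℝ) (c : σ → ℝ) :
    fderiv ℝ (crossEntropy y) Z (fun s _ ↦ c s) = 0 := by
  simp [fderiv_crossEntropy_apply, ← sum_mul, sum_softmax]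

lemma fderiv_crossEntropy_const (c : σ → ℝ) :
    fderiv ℝ (crossEntropy y) (fun s _ ↦ c s) = fderiv ℝ (crossEntropy y) fun _ _ ↦ 0 := by
  ext D
  simp only [fderiv_crossEntropy_apply, softmax_const]

lemma fderiv_crossEntropy_apply_single [DecidableEq σ] (Z : σ → κ → ℝ) (s : σ) (d : κ → ℝ) :
    fderiv ℝ (crossEntropy y) Z (Pi.single s d) = ∑ j, softmax (Z s) j * d j - d (y s) := by
  rw [fderiv_crossEntropy_apply, Fintype.sum_eq_single s fun s' hs ↦ by simp [hs]]
  simp only [Pi.single_eq_same]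

lemma crossEntropy_const (c : σ → ℝ) :
    crossEntropy y (fun s _ ↦ c s) = Fintype.card σ * Real.log (Fintype.card κ) := by
  simp [crossEntropy, logSumExp_const]

variable {y}

lemma crossEntropy_add_fderiv_lt {Z Z' : σ → κ → ℝ}
    (h : ∃ s i j, Z' s i - Z s i ≠ Z' s j - Z s j) :
    crossEntropy y Z + fderiv ℝ (crossEntropy y) Z (Z' - Z) < crossEntropy y Z' := by
  obtain ⟨s₀, hs₀⟩ := h
  rw [fderiv_crossEntropy_apply, crossEntropy, ← sum_add_distrib]
  refine sum_lt_sum (fun s _ ↦ ?_) ⟨s₀, mem_univ _, ?_⟩ <;> simp only [Pi.sub_apply]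
  · linarith [logSumExp_add_le (Z s) (Z' s)]
  · linarith [logSumExp_add_lt hs₀]

end CrossEntropy

section Params

/-- The parameter space of the layer-peeled model, with its Euclidean norm: a vector
`x (.inl j)` for each class `j : κ` (its classifier) and a vector `x (.inr s)` for each sample
`s : σ` (its feature). -/
abbrev Params (κ σ V : Type*) : Type _ := PiLp 2 fun _ : κ ⊕ σ ↦ V

variable {κ σ V : Type*}

/-- The parameters with classifiers `W` and features `H`. -/
def params (W : κ → V) (H : σ → V) : Params κ σ V := WithLp.toLp 2 (Sum.elim W H)

@[simp]
lemma params_inl (W : κ → V) (H : σ → V) (j : κ) : params W H (.inl j) = W j := rfl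

@[simp]
lemma params_inr (W : κ → V) (H : σ → V) (s : σ) : params W H (.inr s) = H s := rfl

variable [NormedAddCommGroup V]

lemma norm_sq_eq_sum_add_sum [Fintype κ] [Fintype σ] (x : Params κ σ V) :
    ‖x‖ ^ 2 = ∑ j, ‖x (.inl j)‖ ^ 2 + ∑ s, ‖x (.inr s)‖ ^ 2 := by
  rw [PiLp.norm_sq_eq_of_L2, Fintype.sum_sum_type]

variable [InnerProductSpace ℝ V]

/-- The logits `⟪w_j, h_s⟫` of every sample `s` and class `j`, as a quadratic function of the
parameters. -/
noncomputable def logits : QuadraticMap ℝ (Params κ σ V) (σ → κ → ℝ) :=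
  LinearMap.BilinMap.toQuadraticMap <|
    LinearMap.mk₂ ℝ (fun (x y : Params κ σ V) s j ↦ ⟪x (.inl j), y (.inr s)⟫)
      (fun _ _ _ ↦ by ext; simp [inner_add_left]) (fun _ _ _ ↦ by ext; simp [inner_smul_left])
      (fun _ _ _ ↦ by ext; simp [inner_add_right]) (fun _ _ _ ↦ by ext; simp [inner_smul_right])

lemma logits_apply (x : Params κ σ V) (s : σ) (j : κ) :
    logits x s j = ⟪x (.inl j), x (.inr s)⟫ := rfl

lemma polar_logits (x v : Params κ σ V) (s : σ) (j : κ) :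
    polar logits x v s j = ⟪x (.inl j), v (.inr s)⟫ + ⟪v (.inl j), x (.inr s)⟫ := by
  simp only [polar, Pi.sub_apply, logits_apply, PiLp.add_apply, inner_add_left, inner_add_right]
  ring

lemma polar_logits_params_neg (x : Params κ σ V) :
    polar logits x (params (fun j ↦ x (.inl j)) (fun s ↦ -x (.inr s))) = 0 := by
  ext s j
  simp [polar_logits]

variable [Fintype κ]

lemma sum_logits_eq_zero {x : Params κ σ V} (hsum : ∑ j, x (.inl j) = 0) (s : σ) :
    ∑ j, logits x s j = 0 := by
  simp only [logits_apply, ← sum_inner, hsum, inner_zero_left]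

variable [Fintype σ]

lemma inner_eq_sum_add_sum (x v : Params κ σ V) :
    ⟪x, v⟫ = ∑ j, ⟪x (.inl j), v (.inl j)⟫ + ∑ s, ⟪x (.inr s), v (.inr s)⟫ := by
  rw [PiLp.inner_apply, Fintype.sum_sum_type]

end Params

section Duality

variable {κ V : Type*} [Fintype κ] [Nonempty κ]

lemma finrank_ker_sum_add_one :
    Module.finrank ℝ (LinearMap.ker (∑ j, LinearMap.proj j : (κ → ℝ) →ₗ[ℝ] ℝ)) + 1 =
      Fintype.card κ := by
  classical
  rw [Module.Dual.finrank_ker_add_one_of_ne_zero, Module.finrank_fintype_fun_eq_card]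
  obtain ⟨k⟩ := ‹Nonempty κ›
  exact fun h ↦ by simpa using LinearMap.congr_fun h (Pi.single k 1)

variable [NormedAddCommGroup V] [InnerProductSpace ℝ V]

lemma exists_forall_inner_eq {W : κ → V}
    (hcard : Fintype.card κ ≤ Module.finrank ℝ V + 1) (hsum : ∑ j, W j = 0)
    (hsep : ∀ a, (∀ j, ⟪W j, a⟫ = 0) → a = 0) {u : κ → ℝ} (hu : ∑ j, u j = 0) :
    ∃ a, ∀ j, ⟪W j, a⟫ = u j := by
  let T : V →ₗ[ℝ] κ → ℝ := LinearMap.pi fun j ↦ innerₗ V (W j)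
  let S : (κ → ℝ) →ₗ[ℝ] ℝ := ∑ j, LinearMap.proj j
  have hT : Function.Injective T := (injective_iff_map_eq_zero T).2 fun a ha ↦
    hsep a fun j ↦ congr_fun ha j
  have hle : LinearMap.range T ≤ LinearMap.ker S := by
    rintro _ ⟨a, rfl⟩
    simp [S, T, ← sum_inner, hsum]
  have hrange : LinearMap.range T = LinearMap.ker S := by
    refine Submodule.eq_of_le_of_finrank_le hle ?_
    have hker : Module.finrank ℝ (LinearMap.ker S) + 1 = Fintype.card κ := finrank_ker_sum_add_one
    rw [LinearMap.finrank_range_of_inj hT]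
    lia
  have hmem : u ∈ LinearMap.range T := hrange ▸ by simpa [S] using hu
  obtain ⟨a, ha⟩ := hmem
  exact ⟨a, congr_fun ha⟩

end Duality

namespace IsSphereCritical

variable {κ σ V : Type*} [Fintype κ] [Fintype σ] [NormedAddCommGroup V] [InnerProductSpace ℝ V]
  {g : (σ → κ → ℝ) →L[ℝ] ℝ} {μ : ℝ} {x : Params κ σ V}

lemma sum_inner_sq_eq (h : IsSphereCritical logits g μ x) (hμ : μ ≠ 0) (a : V) :
    ∑ j, ⟪x (.inl j), a⟫ ^ 2 = ∑ s, ⟪x (.inr s), a⟫ ^ 2 := by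
  let v : Params κ σ V := params (fun j ↦ ⟪x (.inl j), a⟫ • a) (fun s ↦ -⟪x (.inr s), a⟫ • a)
  have hpolar : polar logits x v = 0 := by
    ext s j
    simp [v, polar_logits, inner_smul_left, inner_smul_right, real_inner_comm a, mul_comm]
  have hinner := h.polar_eq v
  rw [hpolar, map_zero, eq_comm, mul_eq_zero, or_iff_right (mul_ne_zero two_ne_zero hμ)] at hinner
  simp only [v, inner_eq_sum_add_sum, params_inl, params_inr, inner_smul_right, neg_mul,
    sum_neg_distrib, ← sq] at hinner
  linarith

lemma inner_params_neg_eq_zero (h : IsSphereCritical logits g μ x) (hμ : μ ≠ 0) :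
    ⟪x, params (fun j ↦ x (.inl j)) (fun s ↦ -x (.inr s))⟫ = 0 := by
  have hzero := h.polar_eq (params (fun j ↦ x (.inl j)) (fun s ↦ -x (.inr s)))
  rw [polar_logits_params_neg, map_zero] at hzero
  simpa [hμ] using hzero.symm

lemma sum_norm_sq_eq (h : IsSphereCritical logits g μ x) (hμ : μ ≠ 0) :
    ∑ j, ‖x (.inl j)‖ ^ 2 = ∑ s, ‖x (.inr s)‖ ^ 2 := by
  have hinner := h.inner_params_neg_eq_zero hμ
  simp only [inner_eq_sum_add_sum, params_inl, params_inr, inner_neg_right, sum_neg_distrib,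
    real_inner_self_eq_norm_sq] at hinner
  linarith

lemma eigenvalue_neg (h : IsSphereCritical logits g μ x) (hμ : μ ≠ 0) (hx : x ≠ 0) : μ < 0 := by
  have hlogits : logits (params (fun j ↦ x (.inl j)) (fun s ↦ -x (.inr s))) = -logits x := by
    ext s j
    simp [logits_apply]
  have hnorm : ‖params (fun j ↦ x (.inl j)) (fun s ↦ -x (.inr s))‖ ^ 2 = ‖x‖ ^ 2 := by
    simp [norm_sq_eq_sum_add_sum]
  have hle := h.mul_norm_sq_le _ (polar_logits_params_neg x) (h.inner_params_neg_eq_zero hμ)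
  rw [hnorm, hlogits, map_neg, h.apply_self] at hle
  have hnorm_pos : 0 < ‖x‖ ^ 2 := by positivity
  exact lt_of_le_of_ne (by nlinarith) hμ

lemma sum_classifier_eq_zero (h : IsSphereCritical logits g μ x) (hμ : μ ≠ 0)
    (hg : ∀ c : σ → ℝ, g (fun s _ ↦ c s) = 0) : ∑ j, x (.inl j) = 0 := by
  refine ext_inner_right ℝ fun b ↦ ?_
  have hshift := h.polar_eq (params (fun _ ↦ b) 0)
  have hpolar : polar logits x (params (fun _ ↦ b) 0) = fun s _ ↦ ⟪b, x (.inr s)⟫ := by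
    ext s j
    simp [polar_logits]
  rw [hpolar, hg] at hshift
  simpa [inner_eq_sum_add_sum, ← sum_inner, hμ] using hshift.symm

lemma mul_le_apply_of_forall_inner_eq_zero (h : IsSphereCritical logits g μ x) (hμ : μ ≠ 0)
    {a : V} (ha : ‖a‖ = 1) (hWa : ∀ j, ⟪x (.inl j), a⟫ = 0) (u : κ → ℝ) (v : σ → ℝ) :
    μ * (∑ j, u j ^ 2 + ∑ s, v s ^ 2) ≤ g fun s j ↦ v s * u j := by
  have hHa (s : σ) : ⟪x (.inr s), a⟫ = 0 := by
    have hsum : ∑ s, ⟪x (.inr s), a⟫ ^ 2 = 0 := by simp [← h.sum_inner_sq_eq hμ, hWa]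
    exact sq_eq_zero_iff.1 ((sum_eq_zero_iff_of_nonneg fun _ _ ↦ sq_nonneg _).1 hsum s (mem_univ s))
  let w : Params κ σ V := params (fun j ↦ u j • a) (fun s ↦ v s • a)
  have hpolar : polar logits x w = 0 := by
    ext s j
    simp [w, polar_logits, inner_smul_left, inner_smul_right, hWa, real_inner_comm _ a, hHa]
  have hinner : ⟪x, w⟫ = 0 := by
    simp [w, inner_eq_sum_add_sum, inner_smul_right, hWa, hHa]
  have hlogits : logits w = fun s j ↦ v s * u j := by
    ext s j
    simp [w, logits_apply, inner_smul_left, inner_smul_right, ha, mul_comm]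
  have hnorm : ‖w‖ ^ 2 = ∑ j, u j ^ 2 + ∑ s, v s ^ 2 := by
    simp [w, norm_sq_eq_sum_add_sum, norm_smul, ha]
  rw [← hnorm, ← hlogits]
  exact h.mul_norm_sq_le w hpolar hinner

lemma mul_le_apply_inner (h : IsSphereCritical logits g μ x) (hμ : μ < 0) (a : V) (v : σ → ℝ) :
    μ * (∑ j, ⟪x (.inl j), a⟫ ^ 2 + ∑ s, v s ^ 2) ≤ g fun s j ↦ v s * ⟪x (.inl j), a⟫ := by
  have hpolar : polar logits x (params 0 fun s ↦ v s • a) = fun s j ↦ v s * ⟪x (.inl j), a⟫ := by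
    ext s j
    simp [polar_logits, inner_smul_right]
  rw [← hpolar, h.polar_eq, h.sum_inner_sq_eq hμ.ne, mul_comm 2 μ, mul_assoc,
    ← sum_add_distrib]
  refine mul_le_mul_of_nonpos_left ?_ hμ.le
  simp only [inner_eq_sum_add_sum, params_inl, params_inr, Pi.zero_apply, inner_zero_right,
    sum_const_zero, zero_add, inner_smul_right, mul_sum]
  exact sum_le_sum fun s _ ↦ by linarith [two_mul_le_add_sq ⟪x (.inr s), a⟫ (v s)]

variable [Nonempty κ]

-- Only the part of `u` orthogonal to constants is seen by `g`. Either some direction `a` is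
-- unused by the classifiers, and the second-order condition along `a` applies, or that part of
-- `u` is of the form `⟪x (.inl j), a⟫`, and the first-order condition and AM-GM do.
lemma mul_le_apply_mul (h : IsSphereCritical logits g μ x) (hμ : μ < 0)
    (hg : ∀ c : σ → ℝ, g (fun s _ ↦ c s) = 0)
    (hcard : Fintype.card κ ≤ Module.finrank ℝ V + 1) (u : κ → ℝ) (v : σ → ℝ) :
    μ * (∑ j, u j ^ 2 + ∑ s, v s ^ 2) ≤ g fun s j ↦ v s * u j := by
  by_cases hsep : ∀ a, (∀ j, ⟪x (.inl j), a⟫ = 0) → a = 0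
  · let m : ℝ := (∑ j, u j) / Fintype.card κ
    have hcentered : ∑ j, (u j - m) = 0 := by
      simp [m, mul_div_cancel₀]
    obtain ⟨a, ha⟩ :=
      exists_forall_inner_eq hcard (h.sum_classifier_eq_zero hμ.ne hg) hsep hcentered
    have hsplit : (fun s j ↦ v s * u j) =
        (fun s j ↦ v s * ⟪x (.inl j), a⟫) + fun s (_ : κ) ↦ v s * m := by
      ext s j
      simp only [ha, Pi.add_apply]
      ring
    have hmean : ∑ j, ⟪x (.inl j), a⟫ ^ 2 ≤ ∑ j, u j ^ 2 := by
      have hsq : ∑ j, u j ^ 2 = ∑ j, ((u j - m) ^ 2 + 2 * m * (u j - m) + m ^ 2) :=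
        sum_congr rfl fun j _ ↦ by ring
      simp only [sum_add_distrib, ← mul_sum, hcentered] at hsq
      simp only [ha, hsq, mul_zero, add_zero, le_add_iff_nonneg_right]
      positivity
    rw [hsplit, map_add, hg, add_zero]
    refine le_trans ?_ (h.mul_le_apply_inner hμ a v)
    exact mul_le_mul_of_nonpos_left (add_le_add_left hmean _) hμ.le
  · push Not at hsep
    obtain ⟨a, hWa, ha⟩ := hsep
    refine h.mul_le_apply_of_forall_inner_eq_zero hμ.ne (a := ‖a‖⁻¹ • a) ?_ (fun j ↦ ?_) u v
    · rw [norm_smul, norm_inv, norm_norm, inv_mul_cancel₀ (norm_ne_zero_iff.2 ha)]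
    · rw [inner_smul_right, hWa, mul_zero]

lemma mul_norm_sq_le_apply [FiniteDimensional ℝ V] (h : IsSphereCritical logits g μ x) (hμ : μ < 0)
    (hg : ∀ c : σ → ℝ, g (fun s _ ↦ c s) = 0)
    (hcard : Fintype.card κ ≤ Module.finrank ℝ V + 1) (x' : Params κ σ V) :
    μ * ‖x'‖ ^ 2 ≤ g (logits x') := by
  let b := stdOrthonormalBasis ℝ V
  have hlogits : logits x' =
      ∑ i, fun s j ↦ ⟪x' (.inr s), b i⟫ * ⟪x' (.inl j), b i⟫ := by
    ext s j
    simp only [logits_apply, Finset.sum_apply, ← b.sum_inner_mul_inner (x' (.inl j)) (x' (.inr s)),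
      real_inner_comm (x' (.inr s))]
    exact sum_congr rfl fun _ _ ↦ mul_comm _ _
  have hnorm : ‖x'‖ ^ 2 = ∑ i, (∑ j, ⟪x' (.inl j), b i⟫ ^ 2 + ∑ s, ⟪x' (.inr s), b i⟫ ^ 2) := by
    have hparseval (w : V) : ∑ i, ⟪w, b i⟫ ^ 2 = ‖w‖ ^ 2 := by
      simpa only [Real.norm_eq_abs, sq_abs] using b.sum_sq_norm_inner_left w
    rw [norm_sq_eq_sum_add_sum, sum_add_distrib, sum_comm, sum_comm (t := (univ : Finset σ))]
    simp only [hparseval]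
  rw [hlogits, hnorm, map_sum, mul_sum]
  exact sum_le_sum fun i _ ↦ h.mul_le_apply_mul hμ hg hcard _ _

end IsSphereCritical

section NonzeroMultiplier

lemma eq_of_forall_sum_mul_eq {κ : Type*} [Fintype κ] {p : κ → κ → ℝ} (hpos : ∀ k j, 0 < p k j)
    (hsum : ∀ k, ∑ j, p k j = 1) {f : κ → ℝ} (hf : ∀ k, ∑ j, p k j * f j = f k) (i j : κ) :
    f i = f j := by
  have : Nonempty κ := ⟨i⟩
  obtain ⟨k, hmax⟩ := Finite.exists_max f
  have hzero : ∑ j, p k j * (f k - f j) = 0 := by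
    simp only [mul_sub, sum_sub_distrib, ← sum_mul, hsum, hf, one_mul, sub_self]
  have hall := (sum_eq_zero_iff_of_nonneg fun j _ ↦
    mul_nonneg (hpos k j).le (sub_nonneg.2 (hmax j))).1 hzero
  have hk (j : κ) : f j = f k :=
    (sub_eq_zero.1 ((mul_eq_zero.1 (hall j (mem_univ j))).resolve_left (hpos k j).ne')).symm
  rw [hk i, hk j]

lemma eventually_isLocalMinOn_of_eq {X : Type*} [TopologicalSpace X] {f : X → ℝ} {S : Set X} {x : X}
    (h : IsLocalMinOn f S x) : ∀ᶠ z in 𝓝[S] x, f z = f x → IsLocalMinOn f S z := by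
  filter_upwards [eventually_eventually_nhdsWithin.2 h] with z hz heq
  simpa only [IsLocalMinOn, IsMinFilter, heq] using hz

variable {κ σ V : Type*} [NormedAddCommGroup V] [InnerProductSpace ℝ V] {x : Params κ σ V} {w : V}

lemma logits_eq_const (hW : ∀ j, x (.inl j) = w) : logits x = fun s _ ↦ ⟪w, x (.inr s)⟫ := by
  ext s j
  rw [logits_apply, hW]

variable [Fintype κ] [Fintype σ] {y : σ → κ}

lemma fderiv_zero_polar_of_isLocalMinOn [Nonempty κ] (hx : x ≠ 0)
    (hW : ∀ j, x (.inl j) = w)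
    (hmin : IsLocalMinOn (fun z ↦ crossEntropy y (logits z)) (sphere 0 ‖x‖) x)
    (v : Params κ σ V) :
    fderiv ℝ (crossEntropy y) (fun _ _ ↦ 0) (polar logits x v) = 0 := by
  have hfirst := fderiv_polar_of_isLocalMinOn_sphere hx (differentiable_crossEntropy y _) hmin v
  have hself : fderiv ℝ (crossEntropy y) (logits x) (logits x) = 0 := by
    conv_lhs => rw [logits_eq_const hW, fderiv_crossEntropy_apply_const]
  rwa [hself, zero_div, mul_zero, zero_mul, logits_eq_const hW, fderiv_crossEntropy_const] at hfirst

-- Coinciding classifiers make the loss constant along all changes of the features, so the nearby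
-- points of the sphere obtained in this way are local minima too.
lemma eventually_fderiv_zero_polar_add_smul [Nonempty κ] (hx : x ≠ 0)
    (hW : ∀ j, x (.inl j) = w)
    (hmin : IsLocalMinOn (fun z ↦ crossEntropy y (logits z)) (sphere 0 ‖x‖) x)
    (B : σ → V) (v : Params κ σ V) :
    ∀ᶠ t : ℝ in 𝓝 0,
      fderiv ℝ (crossEntropy y) (fun _ _ ↦ 0) (polar logits (x + t • params 0 B) v) = 0 := by
  have hlim := tendsto_radial_projection hx (params 0 B)
  have hlim_ne := (hlim.mono_right nhdsWithin_le_nhds).eventually_ne hx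
  have hlim_sphere := hlim.eventually self_mem_nhdsWithin
  filter_upwards [hlim.eventually (eventually_isLocalMinOn_of_eq hmin), hlim_ne, hlim_sphere]
    with t hlocal hne hsphere
  set r : ℝ := ‖x‖ / ‖x + t • params 0 B‖
  set z := r • (x + t • params 0 B)
  have hzW (j : κ) : z (.inl j) = r • w := by simp [z, hW]
  have hloss : crossEntropy y (logits z) = crossEntropy y (logits x) := by
    rw [logits_eq_const hW, logits_eq_const hzW, crossEntropy_const, crossEntropy_const]
  rw [dist_zero_right] at hsphere
  have hzero := fderiv_zero_polar_of_isLocalMinOn hne hzW (hsphere ▸ hlocal hloss) v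
  rw [QuadraticMap.polar_smul_left, map_smul, smul_eq_zero] at hzero
  exact hzero.resolve_left fun hr ↦ hne (by simp [z, hr])

lemma fderiv_zero_polar_features [Nonempty κ] (hx : x ≠ 0) (hW : ∀ j, x (.inl j) = w)
    (hmin : IsLocalMinOn (fun z ↦ crossEntropy y (logits z)) (sphere 0 ‖x‖) x)
    (B : σ → V) (v : Params κ σ V) :
    fderiv ℝ (crossEntropy y) (fun _ _ ↦ 0) (polar logits (params 0 B) v) = 0 := by
  have hline := (eventually_fderiv_zero_polar_add_smul hx hW hmin B v).filter_mono
    (nhdsWithin_le_nhds (s := {0}ᶜ))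
  obtain ⟨t, hzero, ht : t ≠ 0⟩ := (hline.and self_mem_nhdsWithin).exists
  rw [QuadraticMap.polar_add_left, QuadraticMap.polar_smul_left, map_add,
    fderiv_zero_polar_of_isLocalMinOn hx hW hmin, map_smul, zero_add, smul_eq_zero] at hzero
  exact hzero.resolve_left ht

lemma not_isLocalMinOn_of_classifiers_eq [Nontrivial κ] [Nonempty σ] [Nontrivial V]
    (hx : x ≠ 0) (hW : ∀ j, x (.inl j) = w) :
    ¬IsLocalMinOn (fun z ↦ crossEntropy y (logits z)) (sphere 0 ‖x‖) x := by
  classical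
  intro hmin
  obtain ⟨s⟩ := ‹Nonempty σ›
  obtain ⟨e, he⟩ := exists_ne (0 : V)
  have hzero := fderiv_zero_polar_features hx hW hmin (Pi.single s e)
    (params (Pi.single (y s) e) 0)
  have hpolar : polar logits (params 0 (Pi.single s e)) (params (Pi.single (y s) e) 0) =
      Pi.single s (Pi.single (y s) (‖e‖ ^ 2)) := by
    ext s' j
    by_cases hs : s' = s
    · by_cases hj : j = y s <;> simp [polar_logits, hs, hj]
    · simp [polar_logits, hs]
  rw [hpolar, fderiv_crossEntropy_apply_single, sum_eq_single (y s) (by simp_all) (by simp),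
    Pi.single_eq_same, softmax_const, sub_eq_zero, mul_eq_right₀ (by simpa using he),
    inv_eq_one, Nat.cast_eq_one] at hzero
  exact Fintype.one_lt_card.ne' hzero

lemma sum_softmax_smul_sub [Nonempty κ] {μ : ℝ}
    (h : IsSphereCritical logits (fderiv ℝ (crossEntropy y) (logits x)) μ x) (s : σ) :
    ∑ j, softmax (logits x s) j • x (.inl j) - x (.inl (y s)) = (2 * μ) • x (.inr s) := by
  classical
  refine ext_inner_right ℝ fun a ↦ ?_
  have hpolar : polar logits x (params 0 (Pi.single s a)) =
      Pi.single s fun j ↦ ⟪x (.inl j), a⟫ := by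
    ext s' j
    by_cases hs : s' = s <;> simp [polar_logits, hs]
  have hfirst := h.polar_eq (params 0 (Pi.single s a))
  rw [hpolar, fderiv_crossEntropy_apply_single] at hfirst
  simpa [inner_eq_sum_add_sum, inner_sub_left, sum_inner, real_inner_smul_left, Pi.single_apply,
    apply_ite] using hfirst

lemma multiplier_ne_zero [Nontrivial κ] [Nontrivial V] (hy : Function.Surjective y) (hx : x ≠ 0)
    (hmin : IsLocalMinOn (fun z ↦ crossEntropy y (logits z)) (sphere 0 ‖x‖) x) {μ : ℝ}
    (h : IsSphereCritical logits (fderiv ℝ (crossEntropy y) (logits x)) μ x) : μ ≠ 0 := by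
  rintro rfl
  have hharmonic (s : σ) : ∑ j, softmax (logits x s) j • x (.inl j) = x (.inl (y s)) := by
    simpa [sub_eq_zero] using sum_softmax_smul_sub h s
  have hW (i j : κ) : x (.inl i) = x (.inl j) := by
    refine ext_inner_right ℝ fun a ↦ eq_of_forall_sum_mul_eq (f := fun j ↦ ⟪x (.inl j), a⟫)
      (p := fun k ↦ softmax (logits x (Function.surjInv hy k)))
      (fun _ ↦ softmax_pos _) (fun _ ↦ sum_softmax _) (fun k ↦ ?_) i j
    simpa only [sum_inner, real_inner_smul_left, Function.surjInv_eq] using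
      congrArg (⟪·, a⟫) (hharmonic (Function.surjInv hy k))
  obtain ⟨k⟩ : Nonempty κ := inferInstance
  have : Nonempty σ := ⟨Function.surjInv hy k⟩
  exact not_isLocalMinOn_of_classifiers_eq hx (fun j ↦ hW j k) hmin

end NonzeroMultiplier

section Symmetry

variable {κ σ V : Type*} [Fintype κ] [Fintype σ]

lemma logSumExp_comp_equiv (e : κ ≃ κ) (z : κ → ℝ) : logSumExp (z ∘ e) = logSumExp z := by
  simp only [logSumExp, Function.comp_apply, Equiv.sum_comp e fun j ↦ Real.exp (z j)]

lemma softmax_comp_equiv (e : κ ≃ κ) (z : κ → ℝ) : softmax (z ∘ e) = softmax z ∘ e := by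
  ext j
  simp only [softmax, Function.comp_apply, Equiv.sum_comp e fun j ↦ Real.exp (z j)]

lemma crossEntropy_comp_equiv {y : σ → κ} {e : κ ≃ κ} {τ : σ ≃ σ} (hy : ∀ s, y (τ s) = e (y s))
    (Z : σ → κ → ℝ) : crossEntropy y (fun s ↦ Z (τ s) ∘ e) = crossEntropy y Z := by
  simp only [crossEntropy, logSumExp_comp_equiv, Function.comp_apply, ← hy]
  exact Equiv.sum_comp τ fun s ↦ logSumExp (Z s) - Z s (y s)

variable [Nonempty κ] [NormedAddCommGroup V] [InnerProductSpace ℝ V] [FiniteDimensional ℝ V]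
  {x : Params κ σ V} {y : σ → κ} {μ : ℝ}

lemma logits_sub_eq_logits_sub
    (h : IsSphereCritical logits (fderiv ℝ (crossEntropy y) (logits x)) μ x) (hμ : μ < 0)
    (hcard : Fintype.card κ ≤ Module.finrank ℝ V + 1) {x' : Params κ σ V} (hnorm : ‖x'‖ = ‖x‖)
    (hle : crossEntropy y (logits x') ≤ crossEntropy y (logits x)) (s : σ) (i j : κ) :
    logits x' s i - logits x s i = logits x' s j - logits x s j := by
  by_contra hne
  have hlt := (crossEntropy_add_fderiv_lt ⟨s, i, j, hne⟩).trans_le hle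
  rw [map_sub, h.apply_self] at hlt
  have hbottom := h.mul_norm_sq_le_apply hμ (fderiv_crossEntropy_apply_const y _) hcard x'
  rw [hnorm] at hbottom
  linarith

lemma logits_comp_equiv (h : IsSphereCritical logits (fderiv ℝ (crossEntropy y) (logits x)) μ x)
    (hμ : μ < 0) (hcard : Fintype.card κ ≤ Module.finrank ℝ V + 1)
    {e : κ ≃ κ} {τ : σ ≃ σ} (hy : ∀ s, y (τ s) = e (y s)) (s : σ) :
    logits x (τ s) ∘ e = logits x s := by
  let x' : Params κ σ V := params (fun j ↦ x (.inl (e j))) (fun s ↦ x (.inr (τ s)))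
  have hlogits : logits x' = fun s ↦ logits x (τ s) ∘ e := rfl
  have hnorm : ‖x'‖ = ‖x‖ := by
    rw [← sq_eq_sq₀ (norm_nonneg _) (norm_nonneg _), norm_sq_eq_sum_add_sum,
      norm_sq_eq_sum_add_sum]
    exact congrArg₂ (· + ·) (Equiv.sum_comp e fun j ↦ ‖x (.inl j)‖ ^ 2)
      (Equiv.sum_comp τ fun s ↦ ‖x (.inr s)‖ ^ 2)
  have hle : crossEntropy y (logits x') ≤ crossEntropy y (logits x) :=
    (hlogits ▸ crossEntropy_comp_equiv hy (logits x)).le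
  have hW : ∑ j, x (.inl j) = 0 :=
    h.sum_classifier_eq_zero hμ.ne (fderiv_crossEntropy_apply_const y _)
  have hW' : ∑ j, x' (.inl j) = 0 := (Equiv.sum_comp e fun j ↦ x (.inl j)).trans hW
  ext i
  have hzero : Fintype.card κ * (logits x' s i - logits x s i) = 0 := by
    rw [← nsmul_eq_mul, ← card_univ, ← sum_const,
      sum_congr rfl fun j _ ↦ logits_sub_eq_logits_sub h hμ hcard hnorm hle s i j,
      sum_sub_distrib, sum_logits_eq_zero hW', sum_logits_eq_zero hW, sub_zero]
  exact sub_eq_zero.1 ((mul_eq_zero.1 hzero).resolve_left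
    (Nat.cast_ne_zero.2 Fintype.card_ne_zero))

end Symmetry

section Collapse

variable {κ ι V : Type*} [Fintype κ]

lemma exists_eq_ite_of_forall_perm [DecidableEq κ] [Nontrivial κ] [Nonempty ι]
    {Φ : κ × ι → κ → ℝ} {S : ℝ} (hsum : ∀ s, ∑ j, Φ s j = S)
    (hperm : ∀ (e : Equiv.Perm κ) (f : Equiv.Perm ι) s, Φ (e s.1, f s.2) ∘ e = Φ s) :
    ∃ a, ∀ s j, Φ s j = if j = s.1 then a else (S - a) / (Fintype.card κ - 1) := by
  classical
  obtain ⟨k₀⟩ : Nonempty κ := inferInstance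
  obtain ⟨i₀⟩ := ‹Nonempty ι›
  have hdiag (k : κ) (i : ι) : Φ (k, i) k = Φ (k₀, i₀) k₀ := by
    simpa using (congr_fun (hperm (Equiv.swap k k₀) (Equiv.swap i i₀) (k, i)) k).symm
  refine ⟨Φ (k₀, i₀) k₀, fun ⟨k, i⟩ j ↦ ?_⟩
  split_ifs with hj
  · rw [hj, hdiag]
  have hoff (j' : κ) (hj' : j' ≠ k) : Φ (k, i) j' = Φ (k, i) j := by
    simpa [Equiv.swap_apply_of_ne_of_ne (Ne.symm hj') (Ne.symm hj)] using
      (congr_fun (hperm (Equiv.swap j' j) 1 (k, i)) j').symm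
  have hcard : (Fintype.card κ : ℝ) - 1 ≠ 0 :=
    sub_ne_zero.2 (Nat.cast_ne_one.2 Fintype.one_lt_card.ne')
  rw [eq_div_iff hcard, ← hsum (k, i), ← hdiag k i, ← sum_erase_eq_sub (mem_univ k),
    sum_congr rfl fun j' hj' ↦ hoff j' (ne_of_mem_erase hj'), sum_const,
    card_erase_of_mem (mem_univ k), card_univ, nsmul_eq_mul,
    Nat.cast_pred Fintype.card_pos, mul_comm]

variable [Fintype ι] [NormedAddCommGroup V] [InnerProductSpace ℝ V] [FiniteDimensional ℝ V]
  {x : Params κ (κ × ι) V} {μ : ℝ}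

lemma logits_comp_perm [Nonempty κ]
    (h : IsSphereCritical logits (fderiv ℝ (crossEntropy Prod.fst) (logits x)) μ x) (hμ : μ < 0)
    (hcard : Fintype.card κ ≤ Module.finrank ℝ V + 1)
    (e : Equiv.Perm κ) (f : Equiv.Perm ι) (s : κ × ι) :
    logits x (e s.1, f s.2) ∘ e = logits x s :=
  logits_comp_equiv h hμ hcard (τ := e.prodCongr f) (fun _ ↦ rfl) s

lemma exists_logits_eq_ite [DecidableEq κ] [Nontrivial κ] [Nonempty ι]
    (h : IsSphereCritical logits (fderiv ℝ (crossEntropy Prod.fst) (logits x)) μ x) (hμ : μ < 0)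
    (hcard : Fintype.card κ ≤ Module.finrank ℝ V + 1) :
    ∃ c : ℝ, ∀ s j, logits x s j = if j = s.1 then c else -c / (Fintype.card κ - 1) := by
  have hW := h.sum_classifier_eq_zero hμ.ne (fderiv_crossEntropy_apply_const _ _)
  simpa only [zero_sub] using
    exists_eq_ite_of_forall_perm (sum_logits_eq_zero hW) (logits_comp_perm h hμ hcard)

lemma exists_classifier_eq_smul_feature [Nontrivial κ] [Nonempty ι]
    (h : IsSphereCritical logits (fderiv ℝ (crossEntropy Prod.fst) (logits x)) μ x) (hμ : μ < 0)
    (hcard : Fintype.card κ ≤ Module.finrank ℝ V + 1) :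
    ∃ C : ℝ, 0 < C ∧ ∀ k i, x (.inl k) = C • x (.inr (k, i)) := by
  classical
  obtain ⟨p, hp⟩ := exists_eq_ite_of_forall_perm (Φ := fun s ↦ softmax (logits x s))
    (fun s ↦ sum_softmax _) fun e f s ↦ by
      rw [← softmax_comp_equiv, logits_comp_perm h hμ hcard]
  set q : ℝ := (1 - p) / (Fintype.card κ - 1)
  have hW := h.sum_classifier_eq_zero hμ.ne (fderiv_crossEntropy_apply_const _ _)
  have hgrad (k : κ) (i : ι) : (p - q - 1) • x (.inl k) = (2 * μ) • x (.inr (k, i)) := by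
    have hsoftmax (j : κ) : softmax (logits x (k, i)) j • x (.inl j) =
        q • x (.inl j) + if j = k then (p - q) • x (.inl j) else 0 := by
      rw [hp]
      split_ifs
      · rw [← add_smul, add_sub_cancel]
      · rw [add_zero]
    rw [← sum_softmax_smul_sub h (k, i), sum_congr rfl fun j _ ↦ hsoftmax j, sum_add_distrib,
      ← smul_sum, hW, smul_zero, zero_add, Fintype.sum_ite_eq', sub_smul _ 1, one_smul]
  have hlt : p - q - 1 < 0 := by
    obtain ⟨k, j, hkj⟩ := exists_pair_ne κ
    obtain ⟨i⟩ := ‹Nonempty ι›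
    have hq : 0 < q := by simpa only [hp, if_neg hkj.symm] using softmax_pos (logits x (k, i)) j
    have hp_lt : 0 < 1 - p := (div_pos_iff_of_pos_right
      (sub_pos.2 (Nat.one_lt_cast.2 Fintype.one_lt_card))).1 hq
    linarith
  refine ⟨2 * μ / (p - q - 1), div_pos_of_neg_of_neg (by linarith) hlt, fun k i ↦ ?_⟩
  rw [div_eq_inv_mul, mul_smul, ← hgrad, inv_smul_smul₀ hlt.ne]

end Collapse

section Statement

variable {K n d : ℕ} {W : Fin K → EuclideanSpace ℝ (Fin d)}
  {H : Fin K → Fin n → EuclideanSpace ℝ (Fin d)}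

lemma neuralCollapse_of_inner_eq_ite [NeZero n] {C c : ℝ} (hne : ¬(W = 0 ∧ H = 0))
    (hsum : ∑ k, W k = 0) (hC : 0 < C) (hWH : ∀ k i, W k = C • H k i)
    (hinner : ∀ k i j, ⟪W j, H k i⟫ = if j = k then c else -c / (K - 1)) :
    NeuralCollapse W H := by
  have hHH (k j : Fin K) (i i' : Fin n) :
      ⟪H k i, H j i'⟫ = C⁻¹ * if k = j then c else -c / (K - 1) := by
    rw [← hinner j i' k, hWH k i, real_inner_smul_left, inv_mul_cancel_left₀ hC.ne']
  have hnorm_sq (k : Fin K) (i : Fin n) : ‖H k i‖ ^ 2 = C⁻¹ * c := by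
    rw [← real_inner_self_eq_norm_sq, hHH, if_pos rfl]
  have hnorm (k k' : Fin K) (i i' : Fin n) : ‖H k i‖ = ‖H k' i'‖ := by
    rw [← sq_eq_sq₀ (norm_nonneg _) (norm_nonneg _), hnorm_sq, hnorm_sq]
  refine ⟨fun k i i' ↦ smul_right_injective _ hC.ne' ((hWH k i).symm.trans (hWH k i')), hsum,
    fun k k' ↦ ?_, hnorm, fun k i hzero ↦ hne ?_, fun k j hkj i i' ↦ ?_, C, hC, hWH⟩
  · rw [hWH k 0, hWH k' 0, norm_smul, norm_smul, hnorm k k' 0 0]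
  · have hH (k' : Fin K) (i' : Fin n) : H k' i' = 0 := by
      rw [← norm_eq_zero, hnorm k' k i' i, hzero, norm_zero]
    exact ⟨funext fun k' ↦ by rw [hWH k' 0, hH, smul_zero, Pi.zero_apply],
      funext fun k' ↦ funext fun i' ↦ hH k' i'⟩
  · rw [hHH, if_neg hkj, hnorm j k i' i, ← sq, hnorm_sq, neg_div, mul_neg, mul_div_assoc', neg_div]

lemma LWH_eq_crossEntropy (W : Fin K → EuclideanSpace ℝ (Fin d))
    (H : Fin K → Fin n → EuclideanSpace ℝ (Fin d)) :
    LWH W H = crossEntropy Prod.fst (logits (params W (Function.uncurry H))) := by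
  rw [crossEntropy, Fintype.sum_prod_type]
  refine sum_congr rfl fun k _ ↦ sum_congr rfl fun i _ ↦ ?_
  have : Nonempty (Fin K) := ⟨k⟩
  rw [logSumExp_sub_apply]
  simp only [logits_apply, params_inl, params_inr, Function.uncurry_apply_pair, sWH,
    inner_sub_left]

lemma norm_params_sq (W : Fin K → EuclideanSpace ℝ (Fin d))
    (H : Fin K → Fin n → EuclideanSpace ℝ (Fin d)) :
    ‖params W (Function.uncurry H)‖ ^ 2 = WF2 W + HF2 H := by
  rw [norm_sq_eq_sum_add_sum, Fintype.sum_prod_type]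
  rfl

lemma norm_params_sub_sq (W W' : Fin K → EuclideanSpace ℝ (Fin d))
    (H H' : Fin K → Fin n → EuclideanSpace ℝ (Fin d)) :
    ‖params W' (Function.uncurry H') - params W (Function.uncurry H)‖ ^ 2 =
      ∑ k, ‖W' k - W k‖ ^ 2 + ∑ k, ∑ i, ‖H' k i - H k i‖ ^ 2 := by
  rw [norm_sq_eq_sum_add_sum, Fintype.sum_prod_type]
  rfl

lemma exists_eq_params {κ ι ν V : Type*} (x : Params κ (ι × ν) V) :
    ∃ (W : κ → V) (H : ι → ν → V), x = params W (Function.uncurry H) :=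
  ⟨fun k ↦ x (.inl k), fun k i ↦ x (.inr (k, i)), by ext (_ | _) <;> rfl⟩

lemma isLocalMinOn_sphere_of_forall_le {ε : ℝ} (hε : 0 < ε)
    (hle : ∀ W' H', WF2 W' + HF2 H' = WF2 W + HF2 H →
      ∑ k, ‖W' k - W k‖ ^ 2 + ∑ k, ∑ i, ‖H' k i - H k i‖ ^ 2 < ε → LWH W H ≤ LWH W' H') :
    IsLocalMinOn (fun z ↦ crossEntropy Prod.fst (logits z))
      (sphere 0 ‖params W (Function.uncurry H)‖) (params W (Function.uncurry H)) := by
  have hball := ball_mem_nhds (params W (Function.uncurry H)) (Real.sqrt_pos.2 hε)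
  filter_upwards [nhdsWithin_le_nhds hball, self_mem_nhdsWithin] with z hz hsphere
  obtain ⟨W', H', rfl⟩ := exists_eq_params z
  rw [← LWH_eq_crossEntropy, ← LWH_eq_crossEntropy]
  refine hle W' H' ?_ ?_
  · rw [← norm_params_sq, ← norm_params_sq, mem_sphere_zero_iff_norm.1 hsphere]
  · rw [← norm_params_sub_sq]
    exact (Real.lt_sqrt (norm_nonneg _)).1 (mem_ball_iff_norm.1 hz)

lemma neuralCollapse_of_isLocalMinOn (hK : 2 ≤ K) (hn : 1 ≤ n) (hd : K - 1 ≤ d)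
    (hne : ¬(W = 0 ∧ H = 0))
    (hmin : IsLocalMinOn (fun z ↦ crossEntropy Prod.fst (logits z))
      (sphere 0 ‖params W (Function.uncurry H)‖) (params W (Function.uncurry H))) :
    NeuralCollapse W H ∧ WF2 W = HF2 H := by
  have : Nontrivial (Fin K) := Fin.nontrivial_iff_two_le.2 hK
  have : NeZero n := ⟨by lia⟩
  have : Nontrivial (EuclideanSpace ℝ (Fin d)) := by
    have : NeZero d := ⟨by lia⟩
    infer_instance
  set x := params W (Function.uncurry H)
  have hx : x ≠ 0 := fun hzero ↦ hne ⟨funext fun k ↦ PiLp.ext_iff.1 hzero (.inl k),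
    funext₂ fun k i ↦ PiLp.ext_iff.1 hzero (.inr (k, i))⟩
  have hcard : Fintype.card (Fin K) ≤ Module.finrank ℝ (EuclideanSpace ℝ (Fin d)) + 1 := by
    rw [Fintype.card_fin, finrank_euclideanSpace_fin]
    lia
  have hcrit := isSphereCritical_of_isLocalMinOn hx (differentiable_crossEntropy _ _) hmin
  have hμ_ne := multiplier_ne_zero Prod.fst_surjective hx hmin hcrit
  have hμ := hcrit.eigenvalue_neg hμ_ne hx
  obtain ⟨C, hC, hWH⟩ := exists_classifier_eq_smul_feature hcrit hμ hcard
  obtain ⟨c, hc⟩ := exists_logits_eq_ite hcrit hμ hcard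
  refine ⟨neuralCollapse_of_inner_eq_ite (c := c) hne ?_ hC hWH fun k i j ↦ ?_, ?_⟩
  · exact hcrit.sum_classifier_eq_zero hμ_ne (fderiv_crossEntropy_apply_const _ _)
  · simpa [x, logits_apply] using hc (k, i) j
  · exact (hcrit.sum_norm_sq_eq hμ_ne).trans (Fintype.sum_prod_type _)

end Statement

end LayerPeeled

theorem non_optimal_points_are_not_local_minima_on_sphere {K n d : ℕ}
    (hK : 2 ≤ K) (hn : 1 ≤ n) (hd : K - 1 ≤ d)
    (W : Fin K → EuclideanSpace ℝ (Fin d)) (H : Fin K → Fin n → EuclideanSpace ℝ (Fin d))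
    (hne : ¬(W = 0 ∧ H = 0))
    (hnot : ¬(NeuralCollapse W H ∧ Real.sqrt (WF2 W) = Real.sqrt (HF2 H))) :
    ∀ ε : ℝ, 0 < ε →
      ∃ (W' : Fin K → EuclideanSpace ℝ (Fin d)) (H' : Fin K → Fin n → EuclideanSpace ℝ (Fin d)),
        WF2 W' + HF2 H' = WF2 W + HF2 H ∧
        ((∑ k, ‖W' k - W k‖ ^ 2) + ∑ k, ∑ i, ‖H' k i - H k i‖ ^ 2) < ε ∧
        LWH W' H' < LWH W H := by
  intro ε hε
  by_contra! hle
  obtain ⟨hcollapse, hbalanced⟩ := LayerPeeled.neuralCollapse_of_isLocalMinOn hK hn hd hne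
    (LayerPeeled.isLocalMinOn_sphere_of_forall_le hε hle)
  exact hnot ⟨hcollapse, congrArg Real.sqrt hbalanced⟩
end
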